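/- arXiv:2401.01435 — 8 statements merged into one kernel-verified Lean document; each statement's English description precedes it below -/
import Mathlib

section
/- Let r be an integer with r > 3 and let u be an integer polynomial that is nilpotent at r of index m. Then m ≤ r. -/
/-!
Let `x i` be the orbit of `r`, and `d i = x (i + 1) - x i`. Since `a - b ∣ u a - u b`, all
`x i - x j` divide `x (i + 1) - x (j + 1)`. As the orbit first reaches `0` at time `m`, the points
`x 0, …, x m` are distinct, and `d i` divides every later difference, hence also
`x i = x i - x m`. Write `x i = s i * d i` and `d (i + 1) = q i * d i`. Then
`s (i + 1) * q i = s i + 1`, the orbit ends at the step where `s = -1`, and `|s 0|` divides `r`.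
So it suffices to show `m ≤ max |s 0| 4`.

The ratios are restricted: `q i ≠ 0, -1` by distinctness, `q i + 1 ∣ q (i + 1) + 1`
(from `x (i + 2) - x i ∣ x (i + 3) - x (i + 1)`), and if `q = 1` holds `n` times in a row then the
next ratio is `1` modulo `1, …, n + 1`.

* Once `|q i + 1| ≥ 3`, this persists, so `|s|` strictly decreases from then on
  (`ZeroOrbit.length_le_of_ratio`).
* In general, look at the first ratio `q ≠ 1`, after `n` ratios equal to `1`. Either
  `|q + 1| ≥ 3` and the previous point bounds the remaining time, or `q ∈ {-2, -3}`, which forces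
  `n ≤ 1`, and induction on `m` applies to the tail. The estimate is `bound_of_jump`.
-/

open Polynomial

/-- `polyIter u n r` is the `n`-fold iterate `u^{(n)}(r)` of the integer polynomial `u` at `r`. -/
def polyIter (u : Polynomial ℤ) (n : ℕ) (r : ℤ) : ℤ := (fun x => u.eval x)^[n] r

/-- `u` is nilpotent at `r` of index `m`: `m` is the least positive integer with `u^{(m)}(r) = 0`. -/
def NilpotentAt (u : Polynomial ℤ) (r : ℤ) (m : ℕ) : Prop :=
  0 < m ∧ polyIter u m r = 0 ∧ ∀ n : ℕ, 0 < n → n < m → polyIter u n r ≠ 0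

/-- A sequence of integers which first vanishes at time `m ≥ 1` and satisfies the divisibilities
of an orbit of an integer polynomial. -/
structure ZeroOrbit (x : ℕ → ℤ) (m : ℕ) : Prop where
  pos : 0 < m
  dvd : ∀ i j, x i - x j ∣ x (i + 1) - x (j + 1)
  zero : x m = 0
  ne : ∀ i < m, x i ≠ 0

namespace ZeroOrbit

variable {x : ℕ → ℤ} {m : ℕ}

lemma shift (h : ZeroOrbit x m) {a : ℕ} (ha : a < m) :
    ZeroOrbit (fun i => x (a + i)) (m - a) where
  pos := by omega
  dvd i j := h.dvd (a + i) (a + j)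
  zero := by
    have : a + (m - a) = m := by omega
    simp only [this, h.zero]
  ne i hi := h.ne _ (by omega)

lemma dvd_add (h : ZeroOrbit x m) (i j k : ℕ) : x i - x j ∣ x (i + k) - x (j + k) := by
  induction k with
  | zero => simp
  | succ k ih => exact ih.trans (h.dvd (i + k) (j + k))

lemma injOn (h : ZeroOrbit x m) {i j : ℕ} (hij : i < j) (hj : j ≤ m) : x i ≠ x j := by
  intro e
  have h1 := h.dvd_add i j (m - j)
  rw [e, sub_self, zero_dvd_iff, show j + (m - j) = m by omega, h.zero, sub_zero] at h1
  exact h.ne _ (by omega) h1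

lemma diff_ne (h : ZeroOrbit x m) {i : ℕ} (hi : i < m) : x (i + 1) - x i ≠ 0 :=
  sub_ne_zero.2 (h.injOn (Nat.lt_succ_self i) hi).symm

lemma diff_dvd_sub (h : ZeroOrbit x m) (k : ℕ) : x 1 - x 0 ∣ x k - x 0 := by
  induction k with
  | zero => simp
  | succ k ih =>
    have h1 := h.dvd_add 1 0 k
    rw [add_comm 1 k, zero_add] at h1
    have := _root_.dvd_add h1 ih
    simpa using this

lemma exists_start (h : ZeroOrbit x m) : ∃ s, x 0 = s * (x 1 - x 0) := by
  have h1 := h.diff_dvd_sub m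
  rw [h.zero, zero_sub, dvd_neg] at h1
  obtain ⟨s, hs⟩ := h1
  exact ⟨s, by rw [mul_comm]; exact hs⟩

lemma exists_ratio (h : ZeroOrbit x m) (i : ℕ) :
    ∃ q, x (i + 2) - x (i + 1) = q * (x (i + 1) - x i) := by
  obtain ⟨q, hq⟩ := h.dvd (i + 1) i
  exact ⟨q, by rw [mul_comm]; exact hq⟩

lemma ratio_ne (h : ZeroOrbit x m) {i : ℕ} (hi : i + 2 ≤ m) {q : ℤ}
    (hq : x (i + 2) - x (i + 1) = q * (x (i + 1) - x i)) : q ≠ 0 ∧ q ≠ -1 := by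
  constructor
  · rintro rfl
    exact h.diff_ne (i := i + 1) (by omega) (by simpa using hq)
  · rintro rfl
    exact h.injOn (i := i) (j := i + 2) (by omega) hi (by linarith)

/-- The orbit has two-step differences `(q + 1) * d` and `(q' + 1) * (q * d)`; the first divides
the second, and `q + 1` is coprime to `q`. -/
lemma ratio_add_one_dvd (h : ZeroOrbit x m) {q q' : ℤ} (hm : 0 < m)
    (hq : x 2 - x 1 = q * (x 1 - x 0)) (hq' : x 3 - x 2 = q' * (x 2 - x 1)) :
    q + 1 ∣ q' + 1 := by
  have h1 := h.dvd 2 0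
  have hd := h.diff_ne hm
  have e1 : x 2 - x 0 = (x 1 - x 0) * (q + 1) := by linarith
  have e2 : x (2 + 1) - x (0 + 1) = (x 1 - x 0) * (q * (q' + 1)) := by
    have : x 3 - x 1 = (q' + 1) * (x 2 - x 1) := by linarith
    simp only [Nat.reduceAdd, zero_add]
    rw [this, hq]; ring
  rw [e1, e2] at h1
  have h2 := (mul_dvd_mul_iff_left hd).1 h1
  exact IsCoprime.dvd_of_dvd_mul_left ⟨1, -1, by ring⟩ h2

/-- If the ratio `q` preceding time `1` has `|q + 1| ≥ 3`, then all later ratios do, and the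
remaining time from `x 1` is at most `|s|`. The value `s = 1` is impossible: its only admissible
ratio is `2`, which leads to `s = 1` again. -/
lemma length_le_of_ratio (h : ZeroOrbit x m) (hm : 2 ≤ m) {q s : ℤ}
    (hq : x 2 - x 1 = q * (x 1 - x 0)) (hq3 : 3 ≤ |q + 1|) (hs : x 1 = s * (x 2 - x 1)) :
    (m : ℤ) - 1 ≤ |s| ∧ s ≠ 1 := by
  induction m generalizing x q s with
  | zero => omega
  | succ m ih =>
    have hd1 : x 2 - x 1 ≠ 0 := h.diff_ne (i := 1) (by omega)
    rcases Nat.lt_or_ge m 2 with hlt | hge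
    · obtain rfl : m = 1 := by omega
      have h0 : x 2 = 0 := h.zero
      have : (s + 1) * (x 2 - x 1) = 0 := by linarith
      have hs1 : s = -1 := by
        rcases mul_eq_zero.1 this with h | h
        · omega
        · exact absurd h hd1
      subst hs1; simp
    · obtain ⟨q', hq'⟩ : ∃ q', x 3 - x 2 = q' * (x 2 - x 1) := h.exists_ratio 1
      obtain ⟨hq0, hq1⟩ := h.ratio_ne (i := 1) (by omega) hq'
      have hdv := h.ratio_add_one_dvd (by omega) hq hq'
      have hq3' : 3 ≤ |q' + 1| := by
        have := Int.le_of_dvd (abs_pos.2 (by omega)) ((abs_dvd_abs _ _).2 hdv)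
        omega
      have hsh2 := h.shift (a := 2) (by omega)
      obtain ⟨s', hs'⟩ : ∃ s', x 2 = s' * (x 3 - x 2) := hsh2.exists_start
      have hsh : ZeroOrbit (fun i => x (1 + i)) m := by
        simpa using h.shift (a := 1) (by omega)
      obtain ⟨hle, hne⟩ := ih hsh hge hq' hq3' hs'
      have hrel : s' * q' = s + 1 := by
        apply mul_right_cancel₀ hd1
        rw [hq'] at hs'
        linarith
      have hs0 : s ≠ 0 := by
        rintro rfl
        exact h.ne 1 (by omega) (by simpa using hs)
      have hs'0 : s' ≠ 0 := by
        rintro rfl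
        exact h.ne 2 (by omega) (by simpa using hs')
      have habs : |s'| * |q'| = |s + 1| := by rw [← abs_mul, hrel]
      -- `omega` does not read the lattice `|·|` on `ℤ`, but it does read `Int.natAbs`.
      have h2 : 2 ≤ |q'| := by simp only [Int.abs_eq_natAbs] at *; omega
      have h3 : 2 * |s'| ≤ |s + 1| := by nlinarith [abs_nonneg s']
      have hs1 : s ≠ 1 := by
        rintro rfl
        have : s' = -1 := by simp only [Int.abs_eq_natAbs] at *; omega
        subst this
        simp only [Int.abs_eq_natAbs] at *; omega
      refine ⟨?_, hs1⟩
      push_cast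
      simp only [Int.abs_eq_natAbs] at *; omega

end ZeroOrbit

/-- The quantitative claim for an orbit of length `m` with `x 0 = s * (x 1 - x 0)`. The values
`s = 1, -1, -2` need sharper bounds for the induction. -/
def LengthBound (s m : ℤ) : Prop :=
  m ≤ max |s| 4 ∧ (s = 1 → m ≤ 3) ∧ (s = -2 → m ≤ 2) ∧ (s = -1 → m ≤ 1)

set_option maxHeartbeats 1000000 in
/-- The estimate at the first ratio `q ≠ 1`, which comes after `n` ratios equal to `1`; `s'` is the
quotient at the start of the tail and `m'` is the length of the tail. For `n ≥ 1` the divisibilities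
give `n * (n + 1) ∣ q - 1`, so a long initial run makes `|q|` large and `|s'|` small. -/
lemma bound_of_jump {s s' q n m' : ℤ} (hn : 0 ≤ n) (hrel : s' * q = s + n + 1)
    (hq0 : q ≠ 0) (hq1 : q ≠ 1) (hqm : q ≠ -1) (hs : s ≠ 0) (hs' : s' ≠ 0)
    (hneg : s < 0 → s + n + 1 < 0) (hd1 : n + 1 ∣ q - 1) (hd2 : 1 ≤ n → n ∣ q - 1)
    (hfin : 3 ≤ |q + 1| → m' ≤ |s'|) (hIH : LengthBound s' m') :
    LengthBound s (n + 1 + m') := by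
  unfold LengthBound at *
  have hmul : 1 ≤ n → n * (n + 1) ≤ |q - 1| := fun h1 => by
    have hc : IsCoprime n (n + 1) := ⟨-1, 1, by ring⟩
    exact Int.le_of_dvd (abs_pos.2 (by omega))
      ((dvd_abs _ _).2 (hc.mul_dvd (hd2 h1) hd1))
  have habs : |s'| * |q| = |s + n + 1| := by rw [← abs_mul, hrel]
  have hs'1 : 1 ≤ |s'| := Int.one_le_abs hs'
  by_cases hc : 3 ≤ |q + 1|
  · -- Here `m' ≤ |s'| = |s + n + 1| / |q|`.
    have hm := hfin hc
    have h2 : 2 ≤ |q| := by simp only [Int.abs_eq_natAbs] at *; omega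
    have h3 : 2 * |s'| ≤ |s + n + 1| := by nlinarith
    rcases lt_or_gt_of_ne hs with hlt | hgt
    · have := hneg hlt
      simp only [Int.abs_eq_natAbs] at *; omega
    · obtain rfl | rfl | rfl | h3n : n = 0 ∨ n = 1 ∨ n = 2 ∨ 3 ≤ n := by omega
      · simp only [Int.abs_eq_natAbs] at *; omega
      · have h4 : 3 ≤ |q| := by simp only [Int.abs_eq_natAbs] at *; omega
        have h5 : 3 * |s'| ≤ |s + 1 + 1| := by nlinarith
        simp only [Int.abs_eq_natAbs] at *; omega
      · have := hmul (by norm_num)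
        have h4 : 5 ≤ |q| := by simp only [Int.abs_eq_natAbs] at *; omega
        have h5 : 5 * |s'| ≤ |s + 2 + 1| := by nlinarith
        simp only [Int.abs_eq_natAbs] at *; omega
      · have h4 := hmul (by omega)
        -- Since `n * (n + 1) - 1 ≤ |q| ≤ s + n + 1`, the quotient `s` is at least `n ^ 2 - 2`.
        have h5 : n * (n + 1) - 1 ≤ |q| := by simp only [Int.abs_eq_natAbs] at *; omega
        have h6 : 3 * n + n ≤ n * (n + 1) := by nlinarith
        have h7 : 11 * |s'| ≤ |s + n + 1| := by nlinarith
        have h8 : |q| ≤ |s + n + 1| := by nlinarith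
        have h9 : 3 * n ≤ s + 2 := by
          rw [abs_of_pos (by omega : 0 < s + n + 1)] at h8
          nlinarith
        simp only [Int.abs_eq_natAbs] at *; omega
  · have hq : q = -2 ∨ q = -3 := by simp only [Int.abs_eq_natAbs] at *; omega
    have hn1 : n ≤ 1 := by
      by_contra hcon
      have := hmul (by omega)
      have h6 : 6 ≤ n * (n + 1) := by nlinarith
      simp only [Int.abs_eq_natAbs] at *; omega
    obtain rfl | rfl : n = 0 ∨ n = 1 := by omega
    · rcases hq with rfl | rfl <;> (simp only [Int.abs_eq_natAbs] at *; omega)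
    · rcases hq with rfl | rfl <;> (simp only [Int.abs_eq_natAbs] at *; omega)

lemma ZeroOrbit.lengthBound {x : ℕ → ℤ} {m : ℕ} (h : ZeroOrbit x m) {s : ℤ}
    (hs : x 0 = s * (x 1 - x 0)) : LengthBound s m := by
  induction m using Nat.strong_induction_on generalizing x s with
  | _ m ih =>
  have hm := h.pos
  have hd := h.diff_ne hm
  have hs0 : s ≠ 0 := by
    rintro rfl
    exact h.ne 0 hm (by simpa using hs)
  set d := x 1 - x 0 with hdd
  by_cases hall : ∀ i < m, x (i + 1) - x i = d
  · -- The orbit is an arithmetic progression, so `m = -s`.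
    have hx : ∀ i ≤ m, x i = (s + i) * d := by
      intro i
      induction i with
      | zero => intro _; simpa using hs
      | succ i IH =>
        intro hi
        have h1 := IH (by omega)
        have h2 := hall i (by omega)
        push_cast; linarith
    have h1 := hx m le_rfl
    rw [h.zero] at h1
    have h2 : s + m = 0 := (mul_eq_zero.1 h1.symm).resolve_right hd
    unfold LengthBound
    simp only [Int.abs_eq_natAbs] at *; omega
  · push Not at hall
    -- The first difference other than `d`; its index is positive, so it has the form `n + 1`.
    classical
    obtain ⟨⟨hlt, hne⟩, hmin⟩ := And.intro (Nat.find_spec hall) (@Nat.find_min _ _ hall)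
    generalize Nat.find hall = k at hlt hne hmin
    obtain _ | n := k
    · exact absurd rfl hne
    have heq : ∀ i ≤ n, x (i + 1) - x i = d := by
      intro i hi
      by_contra hcon
      exact hmin (m := i) (by omega) ⟨by omega, hcon⟩
    have hx : ∀ i ≤ n + 1, x i = (s + i) * d := by
      intro i
      induction i with
      | zero => intro _; simpa using hs
      | succ i IH =>
        intro hi
        have h1 := IH (by omega)
        have h2 := heq i (by omega)
        push_cast; linarith
    obtain ⟨q, hq⟩ := h.exists_ratio n
    obtain ⟨hq0, hqm⟩ := h.ratio_ne (by omega) hq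
    have hsh := h.shift hlt
    obtain ⟨s', hs'⟩ := hsh.exists_start
    have hIH := ih (m - (n + 1)) (by omega) hsh hs'
    have hs'e : x (n + 1) = s' * (x (n + 2) - x (n + 1)) := hs'
    have hqd : x (n + 2) - x (n + 1) = q * d := by rw [hq, heq n le_rfl]
    have hq1 : q ≠ 1 := by
      rintro rfl
      exact hne (by simpa using hqd)
    have hs'0 : s' ≠ 0 := by
      rintro rfl
      exact h.ne (n + 1) hlt (by simpa using hs'e)
    have hrel : s' * q = s + n + 1 := by
      apply mul_right_cancel₀ hd
      have := hx (n + 1) le_rfl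
      push_cast at this
      rw [hqd] at hs'e
      linarith
    have hneg : s < 0 → s + n + 1 < 0 := by
      intro hs1
      by_contra hcon
      have h1 := hx s.natAbs (by omega)
      have h2 : s + (s.natAbs : ℤ) = 0 := by omega
      rw [h2, zero_mul] at h1
      exact h.ne _ (by omega) h1
    -- Comparing `x (n + 1)` with `x j` shows that `n + 1 - j` divides `q - 1`.
    have hdiv : ∀ j ≤ n, ((n : ℤ) + 1 - j) ∣ q - 1 := by
      intro j hj
      have h1 := h.dvd (n + 1) j
      have e1 := hx (n + 1) le_rfl
      have e2 := hx j (by omega)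
      have e3 := hx (j + 1) (by omega)
      push_cast at e1 e3
      have e4 : x (n + 1) - x j = d * ((n : ℤ) + 1 - j) := by rw [e1, e2]; ring
      have e5 : x (n + 1 + 1) - x (j + 1) = d * ((n : ℤ) + 1 - j + (q - 1)) := by
        have : x (n + 1 + 1) = x (n + 1) + q * d := by linarith [hqd]
        rw [this, e1, e3]; ring
      rw [e4, e5] at h1
      have h2 := (mul_dvd_mul_iff_left hd).1 h1
      simpa using h2
    have hfin : 3 ≤ |q + 1| → ((m - (n + 1) : ℕ) : ℤ) ≤ |s'| := by
      intro h3
      have hshn := h.shift (a := n) (by omega)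
      have := (hshn.length_le_of_ratio (by omega) hq h3 hs'e).1
      omega
    have hres := bound_of_jump (n := n) (by omega) hrel hq0 hq1 hqm hs0 hs'0 hneg
      (by simpa using hdiv 0 (by omega))
      (fun h1 => by simpa using hdiv 1 (by omega)) hfin hIH
    have e : (n : ℤ) + 1 + ((m - (n + 1) : ℕ) : ℤ) = m := by omega
    rwa [e] at hres

theorem stmt_0 (r : ℤ) (hr : r > 3) (u : Polynomial ℤ) (m : ℕ)
    (hu : NilpotentAt u r m) : (m : ℤ) ≤ r := by
  obtain ⟨hm, h0, hne⟩ := hu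
  have h : ZeroOrbit (fun i => polyIter u i r) m := by
    refine ⟨hm, fun i j => ?_, h0, fun i hi => ?_⟩
    · simp only [polyIter, Function.iterate_succ_apply']
      exact Polynomial.sub_dvd_eval_sub _ _ u
    · rcases Nat.eq_zero_or_pos i with rfl | hp
      · simp only [polyIter, Function.iterate_zero, id]
        omega
      · exact hne i hp hi
  obtain ⟨s, hs⟩ := h.exists_start
  have hb := (h.lengthBound hs).1
  have hsr : s ∣ r := ⟨_, hs⟩
  have hle : |s| ≤ r := Int.le_of_dvd (by omega) ((abs_dvd _ _).2 hsr)
  have : max |s| 4 ≤ r := max_le hle (by omega)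
  omega
end

section
/- Let r be an integer and let u be an integer polynomial that is nilpotent at r of index m. If |r| ≥ 3, then m ≤ |r|; and if |r| ≤ 2, then m ≤ |r| + 2. -/
/-!
Only one property of the orbit `a i = u^{(i)}(r)` is used: `a i - a j` divides
`a (i + 1) - a (j + 1)`. It makes each step `a (i + 1) - a i` divide all later steps and, since
`a m = 0`, all later terms.

If `r = 0`, all steps have the same absolute value and `m ≤ 2` (`zero_orbit`). Otherwise the terms
up to index `m` are distinct, the first step divides every term, and dividing by it reduces to
`a 1 = s + 1`, where `s = a 0`. The claim for such orbits (`core`) is `m ≤ |s|`, apart from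
`s = 1, m ≤ 3` and `s = 2, m ≤ 4`.

Let `l` be the period of the orbit modulo `s`, so `l ≤ |s|` and `l ∣ m`. If `l = m` there is
nothing more to prove. If `l < m`, the divisibility property for the `l`-th iterate gives
`a l = 2 s` (`core_period`). By periodicity modulo `s` every step is coprime to `s`
(`step_coprime`), so the steps before `l`, which divide `2 s`, divide `2`. Hence either they are
all `1`, or they are `1` followed by steps all equal to `2` or all equal to `-2`. In both cases
`z = a (m - 1)` is known modulo `s`, and `s - z` divides `a 1 - a m = s + 1`, which leaves a
handful of values of `z` to rule out (`core_progression`, `core_double`). The case `s = 1`, in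
which congruences modulo `s` say nothing, is `core_one`.
-/

open Polynomial

/-! ### Divisibility along an orbit -/

section Orbit

variable {a : ℕ → ℤ}

lemma orbit_shift (h : ∀ i j, a i - a j ∣ a (i + 1) - a (j + 1)) (i j k : ℕ) :
    a i - a j ∣ a (i + k) - a (j + k) := by
  induction k with
  | zero => simp
  | succ k ih => exact ih.trans (h _ _)

lemma step_dvd_step (h : ∀ i j, a i - a j ∣ a (i + 1) - a (j + 1)) {i j : ℕ} (hij : i ≤ j) :
    a (i + 1) - a i ∣ a (j + 1) - a j := by
  obtain ⟨k, rfl⟩ := Nat.exists_eq_add_of_le hij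
  have := orbit_shift h (i + 1) i k
  rwa [show i + 1 + k = i + k + 1 by ring] at this

lemma step_dvd_sub (h : ∀ i j, a i - a j ∣ a (i + 1) - a (j + 1)) {i j : ℕ} (hij : i ≤ j) :
    a (i + 1) - a i ∣ a j - a i := by
  induction j, hij using Nat.le_induction with
  | base => simp
  | succ j hj ih =>
    have := dvd_add (step_dvd_step h hj) ih
    rwa [show a (j + 1) - a j + (a j - a i) = a (j + 1) - a i by ring] at this

lemma step_dvd_term (h : ∀ i j, a i - a j ∣ a (i + 1) - a (j + 1)) {m : ℕ} (hm : a m = 0)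
    {i j : ℕ} (him : i ≤ m) (hij : i ≤ j) : a (i + 1) - a i ∣ a j := by
  have := dvd_sub (step_dvd_sub h hij) (step_dvd_sub h him)
  rwa [hm, show a j - a i - (0 - a i) = a j by ring] at this

/-- Before reaching `0`, an orbit whose steps are all `±e` cannot turn back, so it is an
arithmetic progression. -/
lemma eq_of_steps {e : ℤ} (he : a 1 - a 0 = e) {n : ℕ}
    (hs : ∀ i < n, a (i + 1) - a i = e ∨ a (i + 1) - a i = -e)
    (hd : ∀ i, i + 2 ≤ n → a (i + 2) ≠ a i) : ∀ i ≤ n, a i = a 0 + i * e := by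
  have key : ∀ i < n, a (i + 1) - a i = e := by
    intro i
    induction i with
    | zero => intro _; exact he
    | succ i ih =>
      intro hi
      rcases hs (i + 1) hi with h1 | h1
      · exact h1
      · have h2 := ih (by omega)
        exact absurd (by rw [show i + 2 = i + 1 + 1 by rfl]; linarith) (hd i (by omega))
  intro i
  induction i with
  | zero => simp
  | succ i ih =>
    intro hi
    have h1 := ih (by omega)
    have h2 := key i (by omega)
    push_cast
    linarith

/-- The map sends equal terms to equal terms, so a repetition before the index `m` would force an
earlier zero. -/
lemma orbit_ne (h : ∀ i j, a i - a j ∣ a (i + 1) - a (j + 1)) {m : ℕ} (hm : a m = 0)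
    {p : ℕ} (hne : ∀ i, p ≤ i → i < m → a i ≠ 0) {i j : ℕ} (hij : i < j) (hjm : j ≤ m)
    (hp : p ≤ m - (j - i)) : a i ≠ a j := by
  intro hE
  have h1 := orbit_shift h i j (m - j)
  rw [hE, sub_self, zero_dvd_iff, show j + (m - j) = m by omega, hm, sub_zero] at h1
  exact hne (i + (m - j)) (by omega) (by omega) h1

lemma orbit_periodic (h : ∀ i j, a i - a j ∣ a (i + 1) - a (j + 1)) {l : ℕ} (hl : a 0 ∣ a l)
    (q k : ℕ) : a 0 ∣ a (q * l + k) - a k := by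
  induction q with
  | zero => simp
  | succ q ih =>
    have h1 : a 0 ∣ a (l + (q * l + k)) - a (0 + (q * l + k)) :=
      (dvd_sub hl dvd_rfl).trans (orbit_shift h l 0 _)
    have h2 := dvd_add h1 ih
    rw [show (q + 1) * l + k = l + (q * l + k) by ring]
    simpa using h2

/-- If the last step is `±1`, then so are all steps, and the orbit runs straight to `0`. -/
lemma unit_last_step (h : ∀ i j, a i - a j ∣ a (i + 1) - a (j + 1)) {m : ℕ} (hm0 : 0 < m)
    (hm : a m = 0) (hne : ∀ i < m, a i ≠ 0) (h1 : a 1 - a 0 = 1)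
    (hz : a (m - 1) ∣ 1) : m ≤ (a 0).natAbs := by
  have h2 := eq_of_steps (a := a) (n := m) h1 (fun i hi => by
    have h3 := step_dvd_step h (i := i) (j := m - 1) (by omega)
    rw [show m - 1 + 1 = m by omega, hm, zero_sub, dvd_neg] at h3
    exact Int.isUnit_iff.1 (isUnit_of_dvd_one (h3.trans hz)))
    (fun i hi => (orbit_ne h hm (p := 0) (fun i _ => hne i) (i := i) (j := i + 2)
      (by omega) hi (by omega)).symm) m le_rfl
  omega

/-! ### The period modulo the starting point -/

/-- Here `l` is the period of the orbit modulo `a 0`. If `l = m`, the index is bounded by the number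
of residues; otherwise the orbit is at `2 * a 0` after one period. -/
lemma core_period (h : ∀ i j, a i - a j ∣ a (i + 1) - a (j + 1)) {m : ℕ} (hm0 : 0 < m)
    (hm : a m = 0) (hne : ∀ i < m, a i ≠ 0) :
    m ≤ (a 0).natAbs ∨ ∃ l, 0 < l ∧ l < m ∧ l ∣ m ∧ a l = 2 * a 0 ∧
      ∀ i, 0 < i → i < l → ¬ a 0 ∣ a i := by
  classical
  have hs : a 0 ≠ 0 := hne 0 hm0
  have hex : ∃ l, 0 < l ∧ a 0 ∣ a l := ⟨m, hm0, by simp [hm]⟩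
  obtain ⟨hl0, hl⟩ := Nat.find_spec hex
  have hmin : ∀ i, 0 < i → i < Nat.find hex → ¬ a 0 ∣ a i := fun i h0 hi hd =>
    Nat.find_min hex hi ⟨h0, hd⟩
  have hlm : Nat.find hex ≤ m := Nat.find_min' hex ⟨hm0, by simp [hm]⟩
  generalize Nat.find hex = l at *
  rcases hlm.eq_or_lt with rfl | hlt
  · left
    -- the residues of `a 0, …, a (l - 1)` modulo `a 0` are pairwise distinct
    have : NeZero (a 0).natAbs := ⟨by simpa using hs⟩
    have hinj : Function.Injective (fun i : Fin l => ((a i : ℤ) : ZMod (a 0).natAbs)) := by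
      have key : ∀ i j : ℕ, i < j → j < l → ¬ a 0 ∣ a i - a j := by
        intro i j hij hj hd
        have h1 := hd.trans (orbit_shift h i j (l - j))
        rw [show j + (l - j) = l by omega] at h1
        exact hmin (i + (l - j)) (by omega) (by omega) ((dvd_sub_left hl).1 h1)
      intro i j hij
      have hE : a 0 ∣ a i - a j := by
        have := (ZMod.intCast_zmod_eq_zero_iff_dvd (a i - a j) (a 0).natAbs).1 (by
          push_cast; exact sub_eq_zero.2 hij)
        exact Int.natAbs_dvd.1 this
      rcases lt_trichotomy i j with hlt | hE' | hlt
      · exact absurd hE (key i j hlt j.2)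
      · exact hE'
      · exact absurd (by simpa using (dvd_neg.2 hE)) (key j i hlt i.2)
    have := Fintype.card_le_of_injective _ hinj
    simpa [ZMod.card] using this
  · right
    have hlm : l ∣ m := by
      have h1 := orbit_periodic h hl (m / l) (m % l)
      rw [show m / l * l + m % l = m by rw [mul_comm]; exact Nat.div_add_mod m l, hm, zero_sub,
        dvd_neg] at h1
      by_contra hnd
      exact hmin (m % l) (Nat.pos_of_ne_zero fun h0 => hnd (Nat.dvd_of_mod_eq_zero h0))
        (Nat.mod_lt _ hl0) h1
    refine ⟨l, hl0, hlt, hlm, ?_, hmin⟩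
    obtain ⟨c, hc⟩ := hl
    obtain ⟨k, rfl⟩ := hlm
    -- along the multiples of `l`, the first step `a 0 * (c - 1)` divides `a (l * k) - a 0 = -a 0`
    have h1 := step_dvd_sub (a := fun i => a (l * i)) (fun i j => by
      simpa [mul_add] using orbit_shift h (l * i) (l * j) l) (Nat.zero_le k)
    simp only [zero_add, mul_one, mul_zero, hm, zero_sub, dvd_neg, hc] at h1
    rw [show a 0 * c - a 0 = a 0 * (c - 1) by ring] at h1
    have h2 : c - 1 ∣ 1 := by
      rw [← mul_dvd_mul_iff_left hs]; simpa using h1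
    have hc0 : c ≠ 0 := fun h0 => hne l hlt (by simp [hc, h0])
    rcases Int.isUnit_iff.1 (isUnit_of_dvd_one h2) with h3 | h3
    · rw [hc, show c = 2 by omega]; ring
    · omega

/-- By periodicity some later step is congruent to the first step `1` modulo `a 0`, and every step
divides it. -/
lemma step_coprime (h : ∀ i j, a i - a j ∣ a (i + 1) - a (j + 1)) (h1 : a 1 - a 0 = 1)
    {l : ℕ} (hl0 : 0 < l) (hl : a 0 ∣ a l) (i : ℕ) : IsCoprime (a (i + 1) - a i) (a 0) := by
  have hle : i ≤ i * l := Nat.le_mul_of_pos_right i hl0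
  obtain ⟨c, hc⟩ := step_dvd_step h hle
  obtain ⟨e, he⟩ := dvd_sub (orbit_periodic h hl i 1) (orbit_periodic h hl i 0)
  simp only [add_zero] at he
  exact ⟨c, -e, by linear_combination -hc + he + h1⟩

lemma abs_bounds {x y : ℤ} (hy : y ≠ 0) (h : x ∣ y) : |x| ≤ |y| :=
  Int.le_of_dvd (abs_pos.2 hy) ((abs_dvd_abs x y).2 h)

/-! ### Orbits with first step one -/

/-- The last two nonzero terms `y, z` satisfy `1 - y ∣ 2 - z` and `1 - z ∣ 2`. -/
lemma core_one (h : ∀ i j, a i - a j ∣ a (i + 1) - a (j + 1)) {m : ℕ} (hm0 : 0 < m)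
    (hm : a m = 0) (hne : ∀ i < m, a i ≠ 0) (h1 : a 1 - a 0 = 1) (hs : a 0 = 1) : m ≤ 3 := by
  by_contra! hm3
  have hinj : ∀ i j, i < j → j ≤ m → a i ≠ a j := fun i j hij hj =>
    orbit_ne h hm (p := 0) (fun i _ => hne i) hij hj (by omega)
  have hz := h 0 (m - 1)
  have hy := h 0 (m - 2)
  rw [show m - 1 + 1 = m by omega, hm, zero_add, sub_zero, hs, show a 1 = 2 by omega] at hz
  rw [show m - 2 + 1 = m - 1 by omega, zero_add, hs, show a 1 = 2 by omega] at hy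
  have hz0 := hne (m - 1) (by omega)
  have hy0 := hne (m - 2) (by omega)
  have hz1 := hinj 0 (m - 1) (by omega) (by omega)
  have hz2 := hinj 1 (m - 1) (by omega) (by omega)
  have hy1 := hinj 0 (m - 2) (by omega) (by omega)
  have hy2 := hinj 1 (m - 2) (by omega) (by omega)
  have hb := abs_le.1 (abs_bounds (by norm_num) hz)
  norm_num at hb
  have hz3 : a (m - 1) = 3 ∨ a (m - 1) = -1 := by omega
  rcases hz3 with hz3 | hz3
  · rw [hz3] at hy
    have := Int.isUnit_iff.1 (isUnit_of_dvd_one (show 1 - a (m - 2) ∣ 1 by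
      rw [← dvd_neg]; simpa using hy))
    omega
  · have := unit_last_step h hm0 hm hne h1 (by rw [hz3]; norm_num)
    rw [hs] at this
    norm_num at this
    omega

/-- The case in which the first `l` steps are `1`. Then `l = a 0`, and
`a (m - 1) ≡ a (l - 1) ≡ -1` modulo `a 0`. -/
lemma core_progression (h : ∀ i j, a i - a j ∣ a (i + 1) - a (j + 1)) {m : ℕ} (hm0 : 0 < m)
    (hm : a m = 0) (hne : ∀ i < m, a i ≠ 0) (h1 : a 1 - a 0 = 1) {l : ℕ} (hl0 : 0 < l)
    (hlm : l < m) (hl : a l = 2 * a 0) (hz2 : a 0 ∣ a (m - 1) - a (l - 1))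
    (hA : ∀ i ≤ l, a i = a 0 + i) (hs1 : a 0 ≠ 1) :
    m ≤ (a 0).natAbs ∨ (a 0 = 2 ∧ m ≤ 4) := by
  have hinj : ∀ i j, i < j → j ≤ m → a i ≠ a j := fun i j hij hj =>
    orbit_ne h hm (p := 0) (fun i _ => hne i) hij hj (by omega)
  have hls := hA l le_rfl
  have hl1 := hA (l - 1) (by omega)
  have hls' : a 0 = l := by omega
  have hz := h 0 (m - 1)
  rw [show m - 1 + 1 = m by omega, hm, zero_add, sub_zero, show a 1 = a 0 + 1 by omega] at hz
  have hdup := hinj (l - 1) (m - 1) (by omega) (by omega)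
  rw [hl1] at hz2 hdup
  rw [Nat.cast_sub (by omega), Nat.cast_one, ← hls'] at hz2 hdup
  obtain ⟨q, hq⟩ := hz2
  have hs2 : 2 ≤ a 0 := by omega
  have hb := abs_bounds (by omega) hz
  rw [abs_of_nonneg (show 0 ≤ a 0 + 1 by omega), abs_le] at hb
  have hzq : a (m - 1) = a 0 * (q + 2) - 1 := by linear_combination hq
  rw [hzq] at hb
  -- `z = a 0 * (q + 2) - 1`, and `|a 0 - z| ≤ a 0 + 1` confines `q` to `[-2, 1]`
  have hq1 : -2 ≤ q := by
    by_contra! hlt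
    nlinarith
  have hq2 : q ≤ 1 := by
    by_contra! hlt
    nlinarith
  have hq0 : q ≠ 0 := by
    rintro rfl
    omega
  have hq3 : q = -2 ∨ q = -1 ∨ q = 1 := by omega
  rcases hq3 with rfl | rfl | rfl
  · left
    exact unit_last_step h hm0 hm hne h1 (by rw [hzq]; norm_num)
  · left
    refine unit_last_step h hm0 hm hne h1 ?_
    -- `z = a 0 - 1`, and `a (l - 2) - z = a 0 - 1` divides `a (l - 1) - 0 = 2 * a 0 - 1`
    have h4 := h (l - 2) (m - 1)
    rw [show m - 1 + 1 = m by omega, show l - 2 + 1 = l - 1 by omega, hm, sub_zero, hl1,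
      hA (l - 2) (by omega), Nat.cast_sub (by omega), Nat.cast_sub (by omega), ← hls', hzq] at h4
    rw [hzq]
    obtain ⟨c, hc⟩ := h4
    push_cast at hc
    exact ⟨c - 2, by linear_combination hc⟩
  · right
    -- `a 0 = 2` and `z = 5`, and the orbit begins `2, 3, 4, 5`, so `m - 1 ≤ 3`
    have hs3 : a 0 = 2 := by omega
    refine ⟨hs3, ?_⟩
    obtain rfl : l = 2 := by omega
    have h4 := step_dvd_term h hm (i := 2) (j := 2) (by omega) le_rfl
    have h5 := (step_coprime h h1 hl0 ⟨2, by rw [hl]; ring⟩ 2)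
    have h6 := h5.dvd_of_dvd_mul_right (h4.trans hl.dvd)
    rw [hs3] at h5
    have h7 := Int.isUnit_iff.1 (h5.isUnit_of_dvd' dvd_rfl h6)
    norm_num at h7
    have h8 := hinj 1 3 (by omega) (by omega)
    by_contra! hm4
    have h9 := hinj 3 (m - 1) (by omega) (by omega)
    omega

/-- The case in which the first step `1` is followed by a step `2 * e = ±2` before the index `l`
is impossible: the steps from index `1` up to `l` are all `2 * e`, so
`a (m - 1) ≡ a (l - 1) ≡ -2 * e` modulo `a 0`. -/
lemma core_double (h : ∀ i j, a i - a j ∣ a (i + 1) - a (j + 1)) {m : ℕ}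
    (hm : a m = 0) (hne : ∀ i < m, a i ≠ 0) (h1 : a 1 - a 0 = 1) {l : ℕ} (hl0 : 1 < l)
    (hlm : l < m) (hl : a l = 2 * a 0) (hz2 : a 0 ∣ a (m - 1) - a (l - 1))
    (hodd : ¬ 2 ∣ a 0) {e : ℤ} (he : e = 1 ∨ e = -1)
    (h2 : a 2 - a 1 = 2 * e) (hd2 : ∀ i < l, a (i + 1) - a i ∣ 2) : False := by
  have hinj : ∀ i j, i < j → j ≤ m → a i ≠ a j := fun i j hij hj =>
    orbit_ne h hm (p := 0) (fun i _ => hne i) hij hj (by omega)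
  have h2d : ∀ j, 1 ≤ j → 2 ∣ a (j + 1) - a j := fun j hj => by
    have := step_dvd_step h hj
    norm_num at this
    rw [h2] at this
    exact (Dvd.intro _ rfl).trans this
  have hA := eq_of_steps (a := fun i => a (i + 1)) (n := l - 1) (e := 2 * e) h2 (fun i hi => by
      have h3 := h2d (i + 1) (by omega)
      have h4 := abs_le.1 (abs_bounds (by norm_num) (hd2 (i + 1) (by omega)))
      have h5 := hinj (i + 1) (i + 1 + 1) (by omega) (by omega)
      norm_num at h4
      omega)
    (fun i hi => (hinj (i + 1) (i + 2 + 1) (by omega) (by omega)).symm)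
  have hz2e : 2 ∣ a (m - 1) := by
    have := step_dvd_term h hm (i := 1) (j := m - 1) (by omega) (by omega)
    norm_num at this
    rw [h2] at this
    exact (Dvd.intro _ rfl).trans this
  have hl1 := hA (l - 1) le_rfl
  have hl2 := hA (l - 2) (by omega)
  simp only [zero_add] at hl1 hl2
  rw [show l - 1 + 1 = l by omega, hl, Nat.cast_sub (by omega), Nat.cast_one] at hl1
  rw [show l - 2 + 1 = l - 1 by omega, Nat.cast_sub (by omega), Nat.cast_ofNat] at hl2
  have hl3 : a (l - 1) = 2 * a 0 - 2 * e := by linear_combination hl2 - hl1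
  have hdup := hinj (l - 1) (m - 1) (by omega) (by omega)
  have ha1 := hne 1 (by omega)
  have hz := h 0 (m - 1)
  rw [show m - 1 + 1 = m by omega, hm, zero_add, sub_zero, show a 1 = a 0 + 1 by omega] at hz
  have hb := abs_bounds (by omega) hz
  rw [hl3] at hz2 hdup
  obtain ⟨q, hq⟩ := hz2
  have hzq : a (m - 1) = a 0 * (q + 2) - 2 * e := by linear_combination hq
  -- `z` and `a (l - 1)` are even while `a 0` is odd
  have hqe : 2 ∣ q := by
    have : 2 ∣ a 0 * q := by rw [← hq]; omega
    exact (Int.prime_two.dvd_or_dvd this).resolve_left hodd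
  obtain ⟨p, rfl⟩ := hqe
  have hp0 : p ≠ 0 := by
    rintro rfl
    simp only [mul_zero] at hq
    omega
  rw [hzq] at hb
  have hp : p ≤ -1 ∨ 1 ≤ p := by omega
  rcases he with rfl | rfl
  · have hs : 3 ≤ a 0 := by omega
    rw [abs_of_nonneg (show 0 ≤ a 0 + 1 by omega), abs_le] at hb
    rcases hp with hp | hp <;> nlinarith
  · have hs : a 0 ≤ -3 := by omega
    rw [abs_of_neg (show a 0 + 1 < 0 by omega), abs_le] at hb
    rcases hp with hp | hp <;> nlinarith

/-- The bound for orbits whose first step is `1`, to which the general case is reduced by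
rescaling. -/
lemma core (h : ∀ i j, a i - a j ∣ a (i + 1) - a (j + 1)) {m : ℕ} (hm0 : 0 < m)
    (hm : a m = 0) (hne : ∀ i < m, a i ≠ 0) (h1 : a 1 - a 0 = 1) :
    m ≤ (a 0).natAbs ∨ (a 0 = 1 ∧ m ≤ 3) ∨ (a 0 = 2 ∧ m ≤ 4) := by
  have hinj : ∀ i j, i < j → j ≤ m → a i ≠ a j := fun i j hij hj =>
    orbit_ne h hm (p := 0) (fun i _ => hne i) hij hj (by omega)
  by_cases hs1 : a 0 = 1
  · exact Or.inr (Or.inl ⟨hs1, core_one h hm0 hm hne h1 hs1⟩)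
  rcases core_period h hm0 hm hne with h2 | ⟨l, hl0, hlt, ⟨k, rfl⟩, hl, -⟩
  · exact Or.inl h2
  have hl' : a 0 ∣ a l := ⟨2, by rw [hl]; ring⟩
  have hco := step_coprime h h1 hl0 hl'
  have hd2 : ∀ i < l, a (i + 1) - a i ∣ 2 := fun i hi => by
    have h3 := step_dvd_term h hm (i := i) (j := l) (by omega) (by omega)
    rw [hl] at h3
    exact (hco i).dvd_of_dvd_mul_right h3
  have hz2 : a 0 ∣ a (l * k - 1) - a (l - 1) := by
    have h3 := orbit_periodic h hl' (k - 1) (l - 1)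
    have hk : 1 ≤ k := by
      by_contra! hk
      obtain rfl : k = 0 := by omega
      omega
    obtain ⟨k, rfl⟩ := Nat.exists_eq_add_of_le' hk
    rwa [show l * (k + 1) - 1 = (k + 1 - 1) * l + (l - 1) by
      rw [Nat.add_sub_cancel, mul_add, mul_one, mul_comm, Nat.add_sub_assoc hl0]]
  by_cases hall : ∀ i < l, a (i + 1) - a i = 1 ∨ a (i + 1) - a i = -1
  · have hA := eq_of_steps h1 hall
      (fun i hi => (hinj i (i + 2) (by omega) (by omega)).symm)
    simp only [mul_one] at hA
    rcases core_progression h hm0 hm hne h1 hl0 hlt hl hz2 hA hs1 with h3 | h3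
    · exact Or.inl h3
    · exact Or.inr (Or.inr h3)
  · exfalso
    classical
    push Not at hall
    obtain ⟨htl, ht1, ht2⟩ := Nat.find_spec hall
    have hmin : ∀ i < Nat.find hall, a (i + 1) - a i = 1 ∨ a (i + 1) - a i = -1 := fun i hi => by
      have := Nat.find_min hall hi
      by_contra! h3
      exact this ⟨by omega, h3⟩
    generalize Nat.find hall = t at *
    have htv : a (t + 1) - a t = 2 ∨ a (t + 1) - a t = -2 := by
      have h4 := abs_le.1 (abs_bounds (by norm_num) (hd2 t htl))
      have h5 := hinj t (t + 1) (by omega) (by omega)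
      norm_num at h4
      omega
    have hA := eq_of_steps h1 hmin
      (fun i hi => (hinj i (i + 2) (by omega) (by omega)).symm)
    have ht0 : t ≠ 0 := by
      rintro rfl
      exact ht1 h1
    have ht : t = 1 := by
      by_contra ht
      -- `a t - a (t - 2) = 2` divides `a (t + 1) - a (t - 1)`, which is odd
      have h6 := h t (t - 2)
      have h7 := hA t le_rfl
      have h8 := hA (t - 1) (by omega)
      have h9 := hA (t - 2) (by omega)
      rw [show t - 2 + 1 = t - 1 by omega] at h6
      rw [show a t - a (t - 2) = 2 by omega] at h6
      omega
    subst ht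
    have hodd : ¬ 2 ∣ a 0 := fun hd => by
      have h6 : (2 : ℤ) ∣ a (1 + 1) - a 1 := by omega
      have := Int.isUnit_iff.1 ((hco 1).isUnit_of_dvd' h6 hd)
      omega
    rcases htv with h6 | h6
    · exact core_double h hm hne h1 htl hlt hl hz2 hodd (Or.inl rfl) h6 hd2
    · exact core_double h hm hne h1 htl hlt hl hz2 hodd (Or.inr rfl) h6 hd2

/-! ### The orbit of zero -/

lemma zero_orbit (h : ∀ i j, a i - a j ∣ a (i + 1) - a (j + 1)) {m : ℕ}
    (hm : a m = 0) (hne : ∀ i, 0 < i → i < m → a i ≠ 0) (h0 : a 0 = 0) : m ≤ 2 := by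
  by_contra! hm2
  have h1 := hne 1 (by omega) (by omega)
  have hinj : ∀ i j, i < j → j < m → a i ≠ a j := fun i j hij hj =>
    orbit_ne h hm (p := 1) (fun i hi => hne i (by omega)) hij hj.le (by omega)
  have hper : a (m + 1) = a 1 := by
    have := h m 0
    rw [hm, h0, sub_zero, zero_dvd_iff] at this
    simpa [sub_eq_zero] using this
  -- every step divides the step from `a m = 0` to `a (m + 1) = a 1`, and is a multiple of `a 1`
  have hst : ∀ i < m, a (i + 1) - a i = a 1 ∨ a (i + 1) - a i = -a 1 := fun i hi => by
    have h3 := step_dvd_step h hi.le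
    have h4 := step_dvd_step h (Nat.zero_le i)
    rw [hm, hper, sub_zero] at h3
    rw [zero_add, h0, sub_zero] at h4
    exact Int.natAbs_eq_natAbs_iff.1 (Int.natAbs_eq_of_dvd_dvd h3 h4)
  have hA := eq_of_steps (n := m - 1) (e := a 1) (by rw [h0, sub_zero])
    (fun i hi => hst i (by omega))
    (fun i hi => (hinj i (i + 2) (by omega) (by omega)).symm) (m - 1) le_rfl
  have hL := hst (m - 1) (by omega)
  rw [show m - 1 + 1 = m by omega, hm, hA, h0, Nat.cast_sub (by omega), Nat.cast_one] at hL
  rcases hL with hL | hL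
  · have : a 1 * (m : ℤ) = 0 := by linear_combination -hL
    rcases mul_eq_zero.1 this with h3 | h3
    · exact h1 h3
    · omega
  · have : a 1 * ((m : ℤ) - 2) = 0 := by linear_combination -hL
    rcases mul_eq_zero.1 this with h3 | h3
    · exact h1 h3
    · omega

end Orbit

theorem stmt_1 (r : ℤ) (u : Polynomial ℤ) (m : ℕ) (hu : NilpotentAt u r m) :
    (3 ≤ r.natAbs → m ≤ r.natAbs) ∧ (r.natAbs ≤ 2 → m ≤ r.natAbs + 2) := by
  obtain ⟨hm0, hm, hne⟩ := hu
  have h : ∀ i j, polyIter u i r - polyIter u j r ∣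
      polyIter u (i + 1) r - polyIter u (j + 1) r := fun i j => by
    simp only [polyIter, Function.iterate_succ_apply']
    exact u.sub_dvd_eval_sub _ _
  have hr : polyIter u 0 r = r := rfl
  generalize ha : (fun i => polyIter u i r) = a at *
  have ha' : ∀ i, polyIter u i r = a i := fun i => by rw [← ha]
  simp only [ha'] at *
  by_cases hr0 : r = 0
  · have := zero_orbit h hm hne (hr.trans hr0)
    omega
  have hne' : ∀ i < m, a i ≠ 0 := fun i hi => by
    rcases Nat.eq_zero_or_pos i with rfl | hi0
    · rwa [hr]
    · exact hne i hi0 hi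
  -- rescaling by the first step makes that step equal to `1`
  have hdvd : ∀ j, a 1 - a 0 ∣ a j := fun j =>
    step_dvd_term h hm (Nat.zero_le m) (Nat.zero_le j)
  have hd0 : a 1 - a 0 ≠ 0 := fun h0 => by
    have := hdvd 0
    rw [h0, zero_dvd_iff] at this
    exact hr0 (hr ▸ this)
  choose b hb using hdvd
  obtain ⟨d, hd⟩ : ∃ d, d = a 1 - a 0 := ⟨_, rfl⟩
  rw [← hd] at hd0
  simp only [← hd] at hb
  have hcore := core (a := b) (m := m) (fun i j => by
      rw [← mul_dvd_mul_iff_left hd0, mul_sub, mul_sub, ← hb, ← hb, ← hb, ← hb]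
      exact h i j) hm0
    (by simpa [hm, hd0] using (hb m).symm)
    (fun i hi h0 => hne' i hi (by rw [hb, h0, mul_zero]))
    (by
      apply mul_left_cancel₀ hd0
      rw [mul_sub, ← hb, ← hb, mul_one, hd])
  have hrd : r.natAbs = d.natAbs * (b 0).natAbs := by rw [← Int.natAbs_mul, ← hb, hr]
  have hd1 : 1 ≤ d.natAbs := by omega
  rcases hcore with h1 | ⟨h1, h2⟩ | ⟨h1, h2⟩
  · have := Nat.le_mul_of_pos_left (b 0).natAbs hd1
    omega
  · simp only [h1, Int.natAbs_one, mul_one] at hrd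
    omega
  · rw [h1, show (2 : ℤ).natAbs = 2 from rfl] at hrd
    omega
end

section
/- An integer polynomial u is nilpotent at 4 of index 4 if and only if there exists p ∈ ℤ[X] such that either u(x) = (x − 1) + (x − 1)(x − 2)(x − 3)(x − 4)·p(x), or u(x) = −2x² + 19x − 39 + p(x)·(x − 3)(x − 4)(x − 5)(x − 6). -/
/-!
Write `a, b, c` for the first three iterates of `4`, so that `u` sends `4 ↦ a ↦ b ↦ c ↦ 0` with
`a, b, c ≠ 0`. For an integer polynomial `x - y ∣ u x - u y`; along the orbit this gives
`a - 4 ∣ b - a ∣ c - b ∣ c`, hence `a - 4 ∣ 4`. So `a` has five possible nonzero values. Since also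
`c - 4 ∣ a` and `c - b ∣ c`, only finitely many triples remain, and the divisibilities
between nonconsecutive orbit points leave `(3, 2, 1)`, `(5, 6, 3)` and `(6, 8, 10)`
(`orbit_cases`). The last one is impossible: `u - (X + 2)` would vanish at `4, 6, 8`,
so that `(x - 4)(x - 6)(x - 8)` divides `u x - (x + 2)`, whereas at `x = 10` this says `48 ∣ -12`.
In the other two cases, `u` minus the interpolating polynomial (`X - 1`, respectively
`-2 X² + 19 X - 39`) vanishes at the four orbit points `4, a, b, c` and is therefore divisible by
the product of the corresponding linear factors.
-/

open Polynomial

/-- The orbit `4 ↦ a ↦ b ↦ c ↦ 0` is determined up to three possibilities by the divisibilities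
`x - y ∣ u x - u y` between its points. -/
lemma orbit_cases {a b c : ℤ} (ha : a ≠ 0) (hb : b ≠ 0) (hc : c ≠ 0)
    (h1 : a - 4 ∣ b - a) (h2 : b - 4 ∣ c - a) (h3 : c - 4 ∣ 0 - a)
    (h4 : b - a ∣ c - b) (h5 : c - a ∣ 0 - b) (h6 : c - b ∣ 0 - c) :
    (a = 3 ∧ b = 2 ∧ c = 1) ∨ (a = 5 ∧ b = 6 ∧ c = 3) ∨ (a = 6 ∧ b = 8 ∧ c = 10) := by
  have h7 : a - 4 ∣ 4 := by
    have e1 : a - 4 ∣ c - b := h1.trans h4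
    have e2 : a - 4 ∣ 0 - c := e1.trans h6
    have := (((dvd_refl (a - 4)).add h1).add e1).add e2
    have e : a - 4 + (b - a) + (c - b) + (0 - c) = -4 := by ring
    rw [e] at this
    exact (dvd_neg.mp this)
  have l1 := Int.le_of_dvd (by norm_num) h7
  have l2 := Int.le_of_dvd (by norm_num) (neg_dvd.mpr h7)
  have ha' : a = 2 ∨ a = 3 ∨ a = 5 ∨ a = 6 ∨ a = 8 := by
    have : 0 ≤ a := by omega
    have : a ≤ 8 := by omega
    interval_cases a <;> first | (exfalso; revert ha h7; decide) | decide
  have l3 : |c - 4| ≤ |0 - a| := by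
    have := Int.le_of_dvd (abs_pos.mpr (by omega)) ((abs_dvd_abs _ _).mpr h3)
    exact this
  have l4 : |c - b| ≤ |0 - c| :=
    Int.le_of_dvd (abs_pos.mpr (by omega)) ((abs_dvd_abs _ _).mpr h6)
  rw [abs_le] at l3 l4
  obtain ⟨l5, l6⟩ := l3
  -- The bounds on `c - 4` and `c - b` leave finitely many triples, each tested directly.
  rcases ha' with rfl | rfl | rfl | rfl | rfl <;>
    norm_num at l5 l6
  all_goals
    have lc1 : -4 ≤ c := by linarith
    have lc2 : c ≤ 12 := by linarith
    interval_cases c <;> first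
      | (exfalso; revert h3 hc; decide)
      | (norm_num at l4
         obtain ⟨l7, l8⟩ := l4
         have lb1 : -12 ≤ b := by linarith
         have lb2 : b ≤ 24 := by linarith
         interval_cases b <;> first
           | (exfalso; revert hb h1 h2 h4 h5 h6; decide)
           | decide)

/-- A root distinct from `a` survives division by `X - a`. -/
lemma root_of_mul {q : ℤ[X]} {a b : ℤ} (h : ((X - C a) * q).IsRoot b) (hab : b ≠ a) :
    q.IsRoot b := by
  have h' : (b - a) * q.eval b = 0 := by simpa [IsRoot] using h
  exact (mul_eq_zero.mp h').resolve_left (sub_ne_zero.mpr hab)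

lemma three_roots {f : ℤ[X]} {a b c : ℤ} (ha : f.IsRoot a) (hb : f.IsRoot b) (hc : f.IsRoot c)
    (hab : b ≠ a) (hac : c ≠ a) (hbc : c ≠ b) :
    ∃ q : ℤ[X], f = (X - C a) * ((X - C b) * ((X - C c) * q)) := by
  obtain ⟨f, rfl⟩ := dvd_iff_isRoot.mpr ha
  obtain ⟨g, rfl⟩ := dvd_iff_isRoot.mpr (root_of_mul hb hab)
  obtain ⟨q, rfl⟩ := dvd_iff_isRoot.mpr (root_of_mul (root_of_mul hc hac) hbc)
  exact ⟨q, rfl⟩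

lemma four_roots {f : ℤ[X]} {a b c d : ℤ} (ha : f.IsRoot a) (hb : f.IsRoot b) (hc : f.IsRoot c)
    (hd : f.IsRoot d) (hab : b ≠ a) (hac : c ≠ a) (hbc : c ≠ b)
    (had : d ≠ a) (hbd : d ≠ b) (hcd : d ≠ c) :
    ∃ q : ℤ[X], f = (X - C a) * ((X - C b) * ((X - C c) * ((X - C d) * q))) := by
  obtain ⟨q, rfl⟩ := three_roots ha hb hc hab hac hbc
  obtain ⟨q, rfl⟩ :=
    dvd_iff_isRoot.mpr (root_of_mul (root_of_mul (root_of_mul hd had) hbd) hcd)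
  exact ⟨q, rfl⟩

lemma nilpotentAt_four_iff (u : ℤ[X]) :
    NilpotentAt u 4 4 ↔ ∃ a b c : ℤ, a ≠ 0 ∧ b ≠ 0 ∧ c ≠ 0 ∧
      u.eval 4 = a ∧ u.eval a = b ∧ u.eval b = c ∧ u.eval c = 0 := by
  constructor
  · rintro ⟨-, h0, h⟩
    exact ⟨_, _, _, h 1 (by norm_num) (by norm_num), h 2 (by norm_num) (by norm_num),
      h 3 (by norm_num) (by norm_num), rfl, rfl, rfl, h0⟩
  · rintro ⟨a, b, c, ha, hb, hc, rfl, rfl, rfl, h0⟩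
    refine ⟨by norm_num, h0, fun n hn hn' => ?_⟩
    interval_cases n
    exacts [ha, hb, hc]

theorem stmt_3 (u : Polynomial ℤ) :
    NilpotentAt u 4 4 ↔
      ∃ p : Polynomial ℤ,
        u = (X - 1) + (X - 1) * (X - 2) * (X - 3) * (X - 4) * p ∨
        u = -2 * X ^ 2 + 19 * X - 39 + p * ((X - 3) * (X - 4) * (X - 5) * (X - 6)) := by
  rw [nilpotentAt_four_iff]
  constructor
  · rintro ⟨a, b, c, ha, hb, hc, h1, h2, h3, h4⟩
    have key : ∀ x y : ℤ, x - y ∣ u.eval x - u.eval y := fun x y => sub_dvd_eval_sub x y u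
    have k1 := key a 4
    have k2 := key b 4
    have k3 := key c 4
    have k4 := key b a
    have k5 := key c a
    have k6 := key c b
    rw [h1, h2] at k1
    rw [h1, h3] at k2
    rw [h1, h4] at k3
    rw [h2, h3] at k4
    rw [h2, h4] at k5
    rw [h3, h4] at k6
    rcases orbit_cases ha hb hc k1 k2 k3 k4 k5 k6 with
      ⟨rfl, rfl, rfl⟩ | ⟨rfl, rfl, rfl⟩ | ⟨rfl, rfl, rfl⟩
    · obtain ⟨q, hq⟩ := four_roots (f := u - (X - 1)) (a := 1) (b := 2) (c := 3) (d := 4)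
        (by simp [IsRoot, *]) (by simp [IsRoot, *]) (by simp [IsRoot, *]) (by simp [IsRoot, *])
        (by norm_num) (by norm_num) (by norm_num) (by norm_num) (by norm_num) (by norm_num)
      refine ⟨q, Or.inl ?_⟩
      simp only [map_one, map_ofNat] at hq
      linear_combination hq
    · obtain ⟨q, hq⟩ := four_roots (f := u - (-2 * X ^ 2 + 19 * X - 39))
        (a := 3) (b := 4) (c := 5) (d := 6)
        (by simp [IsRoot, *]) (by simp [IsRoot, *]) (by simp [IsRoot, *]) (by simp [IsRoot, *])
        (by norm_num) (by norm_num) (by norm_num) (by norm_num) (by norm_num) (by norm_num)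
      refine ⟨q, Or.inr ?_⟩
      simp only [map_ofNat] at hq
      linear_combination hq
    · obtain ⟨q, hq⟩ := three_roots (f := u - (X + 2)) (a := 4) (b := 6) (c := 8)
        (by simp [IsRoot, *]) (by simp [IsRoot, *]) (by simp [IsRoot, *])
        (by norm_num) (by norm_num) (by norm_num)
      have h10 := congrArg (eval 10) hq
      simp [h4] at h10
      omega
  · rintro ⟨p, rfl | rfl⟩
    · exact ⟨3, 2, 1, by norm_num, by norm_num, by norm_num, by simp; try norm_num,
        by simp; try norm_num, by simp; try norm_num, by simp⟩
    · exact ⟨5, 6, 3, by norm_num, by norm_num, by norm_num, by simp; try norm_num,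
        by simp; try norm_num, by simp; try norm_num, by simp; try norm_num⟩
end

section
/- Let r ≥ 2 and m ≥ 1 be integers, let u be an integer polynomial nilpotent at r of index m, and let k ≥ 0 be an integer such that u^{(i)}(r) = r + i for every 0 ≤ i ≤ k, while u^{(k+1)}(r) ≠ r + k + 1. Then r ≥ k! − k − 1. -/
/-! Write `a n = u^{(n)}(r)`. The polynomial `u - X - 1` vanishes at `r, …, r + k - 1`, so its value
at `r + k` is divisible by `k!` (`factorial_dvd_eval`); that is, `a (k+1) = r + k + 1 + k! c`, with
`c ≠ 0`. Since `x - y` divides `u(x) - u(y)`, the difference `a (k+1) - a k = 1 + k! c` divides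
`a n - a k` for every `n ≥ k` (`polyIter_sub_dvd`). The orbit stays positive up to time `k`, so `m > k`
and taking `n = m` shows that `1 + k! c` divides `r + k > 0`. Hence
`k! - 1 ≤ |1 + k! c| ≤ r + k`. -/

open Polynomial

theorem polyIter_succ (u : Polynomial ℤ) (n : ℕ) (r : ℤ) :
    polyIter u (n + 1) r = u.eval (polyIter u n r) := by
  simp only [polyIter, Function.iterate_succ_apply']

theorem exists_eq_mul_prod (f : Polynomial ℤ) (r : ℤ) (k : ℕ)
    (h : ∀ i < k, f.eval (r + i) = 0) :
    ∃ g : Polynomial ℤ, f = g * ∏ i ∈ Finset.range k, (X - C (r + i)) := by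
  induction k with
  | zero => exact ⟨f, by simp⟩
  | succ k ih =>
    obtain ⟨g, hg⟩ := ih fun i hi => h i (by omega)
    have h0 := h k (by omega)
    rw [hg, eval_mul, eval_prod] at h0
    have hne : ∏ i ∈ Finset.range k, eval (r + k : ℤ) (X - C (r + (i : ℤ))) ≠ 0 := by
      refine Finset.prod_ne_zero_iff.2 fun i hi => ?_
      have := Finset.mem_range.1 hi
      simp only [eval_sub, eval_X, eval_C]
      omega
    obtain ⟨q, hq⟩ := dvd_iff_isRoot.2 ((mul_eq_zero.1 h0).resolve_right hne)
    refine ⟨q, ?_⟩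
    rw [Finset.prod_range_succ, hg, hq]
    ring

theorem factorial_dvd_eval (f : Polynomial ℤ) (r : ℤ) (k : ℕ)
    (h : ∀ i < k, f.eval (r + i) = 0) : (k.factorial : ℤ) ∣ f.eval (r + k) := by
  obtain ⟨g, hg⟩ := exists_eq_mul_prod f r k h
  rw [hg, eval_mul, eval_prod]
  refine Dvd.dvd.mul_left (dvd_of_eq ?_) _
  rw [← Nat.descFactorial_self, Nat.descFactorial_eq_prod_range, Nat.cast_prod]
  refine Finset.prod_congr rfl fun i hi => ?_
  have := Finset.mem_range.1 hi
  simp only [eval_sub, eval_X, eval_C]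
  omega

theorem polyIter_sub_dvd (u : Polynomial ℤ) (r : ℤ) (k j : ℕ) :
    polyIter u (k + 1) r - polyIter u k r ∣ polyIter u (k + j) r - polyIter u k r := by
  induction j with
  | zero => simp
  | succ j ih =>
    have h := ih.trans (sub_dvd_eval_sub (polyIter u (k + j) r) (polyIter u k r) u)
    rw [← polyIter_succ, ← polyIter_succ] at h
    have := dvd_add h (dvd_refl (polyIter u (k + 1) r - polyIter u k r))
    rwa [sub_add_sub_cancel] at this

theorem stmt_5 (r : ℤ) (hr : 2 ≤ r) (m : ℕ) (hm : 1 ≤ m) (u : Polynomial ℤ)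
    (hu : NilpotentAt u r m) (k : ℕ)
    (hk : ∀ i : ℕ, i ≤ k → polyIter u i r = r + i)
    (hk' : polyIter u (k + 1) r ≠ r + k + 1) :
    (k.factorial : ℤ) - k - 1 ≤ r := by
  obtain ⟨-, hm0, -⟩ := hu
  have hkm : k ≤ m := by
    by_contra! hlt
    have := hk m hlt.le
    omega
  have hfac : (k.factorial : ℤ) ∣ (u - X - 1).eval (r + k) := by
    refine factorial_dvd_eval _ r k fun i hi => ?_
    have h := hk (i + 1) hi
    rw [polyIter_succ, hk i hi.le] at h
    simp only [eval_sub, eval_X, eval_one, h]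
    push_cast
    ring
  obtain ⟨c, hc⟩ := hfac
  have hstep : polyIter u (k + 1) r = r + k + 1 + k.factorial * c := by
    rw [← hc, polyIter_succ, hk k le_rfl]
    simp only [eval_sub, eval_X, eval_one]
    ring
  have hc0 : c ≠ 0 := by
    rintro rfl
    exact hk' (by simpa using hstep)
  have hdvd := polyIter_sub_dvd u r k (m - k)
  rw [Nat.add_sub_cancel' hkm, hm0, hk k le_rfl, zero_sub, dvd_neg, hstep] at hdvd
  have hle := Int.le_of_dvd (by omega) ((abs_dvd _ _).2 hdvd)
  have hpos : (0 : ℤ) < k.factorial := by exact_mod_cast k.factorial_pos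
  obtain ⟨h1, h2⟩ := abs_le.1 hle
  rcases lt_or_gt_of_ne hc0 with h | h
  · nlinarith
  · nlinarith
end

section
/- Let n ≥ 1 and let r_0, …, r_n be integers such that r_0, …, r_{n−1} are pairwise distinct. Let p ∈ ℚ[X] with deg p ≤ n − 1 and p(r_i) = r_{i+1} for every i ∈ {0, …, n − 1}. If there exists a polynomial q with integer coefficients such that q(r_i) = r_{i+1} for every i ∈ {0, …, n − 1}, then p has integer coefficients. -/
open Polynomial

/-!
Dividing `q` by the monic polynomial `m = ∏_{i < n} (X - r i)` over `ℤ` leaves a remainder with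
integer coefficients, of degree less than `n`, which agrees with `q` at every node `r i`. By
uniqueness of the interpolating polynomial of degree less than `n` at `n` distinct nodes, `p` is
the image of this remainder in `ℚ[X]`.
-/

theorem stmt_6 (n : ℕ) (hn : 1 ≤ n) (r : ℕ → ℤ)
    (hdist : ∀ i j : ℕ, i < n → j < n → i ≠ j → r i ≠ r j)
    (p : Polynomial ℚ) (hdeg : p.natDegree ≤ n - 1)
    (hp : ∀ i : ℕ, i < n → p.eval ((r i : ℚ)) = (r (i + 1) : ℚ))
    (q : Polynomial ℤ) (hq : ∀ i : ℕ, i < n → q.eval (r i) = r (i + 1)) :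
    ∀ k : ℕ, ∃ z : ℤ, p.coeff k = (z : ℚ) := by
  set m : ℤ[X] := ∏ i ∈ Finset.range n, (X - C (r i)) with hm
  have hmonic : m.Monic := monic_prod_of_monic _ _ fun i _ => monic_X_sub_C _
  have hmdeg : m.degree = n := by
    rw [hm, degree_prod]
    simp only [degree_X_sub_C, Finset.sum_const, Finset.card_range, nsmul_one]
  have hroot : ∀ i < n, m.eval (r i) = 0 := fun i hi => by
    rw [hm, eval_prod]
    exact Finset.prod_eq_zero (Finset.mem_range.2 hi) (by simp)
  have heval : ∀ i < n, (q %ₘ m).eval (r i) = r (i + 1) := fun i hi => by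
    rw [← hq i hi]
    conv_rhs => rw [← modByMonic_add_div q m]
    simp [hroot i hi]
  have hpq : p = (q %ₘ m).map (Int.castRingHom ℚ) := by
    refine eq_of_degrees_lt_of_eval_index_eq (v := fun i => (r i : ℚ)) (Finset.range n)
      ?_ ?_ ?_ ?_
    · intro i hi j hj hij
      by_contra hne
      exact hdist i j (by simpa using hi) (by simpa using hj) hne (Int.cast_injective hij)
    · rw [Finset.card_range]
      exact degree_le_natDegree.trans_lt (by exact_mod_cast (by omega : p.natDegree < n))
    · rw [Finset.card_range]
      exact degree_map_le.trans_lt (hmdeg ▸ degree_modByMonic_lt q hmonic)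
    · intro i hi
      have hi := Finset.mem_range.1 hi
      rw [hp i hi, ← heval i hi]
      simp
  intro k
  exact ⟨(q %ₘ m).coeff k, by rw [hpq]; simp⟩
end

section
/- An integer polynomial u is nilpotent at 3 (of some index) if and only if there exists p ∈ ℤ[X] such that u has one of the following forms, and in each case the index of nilpotency is as indicated: (1) u(x) = (x−3)p(x) (index 1); (2) u(x) = 2(x−2) + p(x)(x−2)(x−3) (index 2); (3) u(x) = −2(x−6) + p(x)(x−3)(x−6) (index 2); (4) u(x) = −4(x−4) + p(x)(x−3)(x−4) (index 2); (5) u(x) = (x−1) + p(x)(x−1)(x−2)(x−3) (index 3); (6) u(x) = −(3x−13)(x−2) + p(x)(x−2)(x−3)(x−4) (index 3); (7) u(x) = −(x−5)(3x−7) + p(x)(x−3)(x−4)(x−5) (index 3); (8) u(x) = −2(x−4) + p(x)(x−2)(x−3)(x−4) (index 3). -/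
/-!
Two facts drive the argument. First, if the orbit of `x` under `u` reaches `0`, then
`u(x) - x ∣ x`: modulo `u(x) - x` the orbit of `x` is constant (`Hits.dvd`). Second, a polynomial
taking the same values as `w` at distinct `a, b` (or `a, b, c`) differs from `w` by a multiple of
`(X - a)(X - b)` (or `(X - a)(X - b)(X - c)`), which restricts the later values.

The first fact leaves `u(3) ∈ {0, 2, 4, 6}`, and then finitely many values for each further point
of the orbit. The branches that reach `0` within three steps are the eight listed forms. Every
other branch either violates one of the resulting congruences, enters a 2-cycle avoiding `0`, or
starts like the orbit of one of the maps `x + 1`, `x + 3`, `2x`, namely `3, 4, 5, 6`, `3, 6, 9` or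
`3, 6, 12`. In these three cases the orbit is trapped in a half-line `x ≥ N` with `N > 0`: a value
`u(x) < N` would need a negative correction term, which the second fact makes so large that
`u(x) < 0` (or, at `x = 6` in the first case, that `u(x) - x ∤ x`), whereas the first fact gives
`0 ≤ u(x) ≤ 2x`. Hence such an orbit never reaches `0` (`Hits.absurd_of_invariant`).
-/

open Polynomial

/-! ### Orbits reaching zero -/

/-- The forward orbit of `x` under `u`, including `x` itself, contains `0`. -/
def Hits (u : ℤ[X]) (x : ℤ) : Prop := ∃ n : ℕ, polyIter u n x = 0

theorem Hits.next {u : ℤ[X]} {x : ℤ} (h : Hits u x) (hx : x ≠ 0) : Hits u (u.eval x) := by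
  obtain ⟨n, hn⟩ := h
  cases n with
  | zero => exact absurd hn hx
  | succ n => exact ⟨n, hn⟩

/-- Modulo `u(x) - x`, the point `x` is fixed by `u`, so a zero in its orbit is congruent to `x`. -/
theorem Hits.dvd {u : ℤ[X]} {x : ℤ} (h : Hits u x) : u.eval x - x ∣ x := by
  obtain ⟨n, hn⟩ := h
  have key : ∀ n, u.eval x - x ∣ polyIter u n x - x := by
    intro n
    induction n with
    | zero => simp [polyIter]
    | succ n ih =>
      have h1 : polyIter u (n + 1) x = u.eval (polyIter u n x) := by
        simp only [polyIter, Function.iterate_succ_apply']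
      have h2 := ih.trans (u.sub_dvd_eval_sub (polyIter u n x) x)
      rw [h1]
      have h3 := dvd_add h2 (dvd_refl (u.eval x - x))
      simpa using h3
  have h := key n
  rw [hn] at h
  simpa using h

theorem Hits.bounds {u : ℤ[X]} {x : ℤ} (h : Hits u x) (hx : 0 < x) :
    0 ≤ u.eval x ∧ u.eval x ≤ 2 * x := by
  have h1 := Int.le_of_dvd hx h.dvd
  have h2 := Int.le_of_dvd hx ((neg_dvd).2 h.dvd)
  constructor <;> linarith

/-- The orbit of `x` avoids `0` if it stays in a set without `0`; stability of the set under `u` is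
needed only at points whose own orbit reaches `0`. -/
theorem Hits.absurd_of_invariant {u : ℤ[X]} (P : ℤ → Prop) (h0 : ¬ P 0)
    (hP : ∀ x, P x → Hits u x → P (u.eval x)) {x : ℤ} (hx : P x) : ¬ Hits u x := by
  rintro ⟨n, hn⟩
  induction n generalizing x with
  | zero => exact h0 ((show x = 0 from hn) ▸ hx)
  | succ n ih => exact ih (hP x hx ⟨n + 1, hn⟩) hn

theorem Hits.absurd_of_cycle {u : ℤ[X]} {a b : ℤ} (h : Hits u a) (ha : a ≠ 0) (hb : b ≠ 0)
    (hab : u.eval a = b) (hba : u.eval b = a) : False := by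
  refine Hits.absurd_of_invariant (u := u) (fun x => x = a ∨ x = b) (by grind) ?_ (Or.inl rfl) h
  rintro x (rfl | rfl) _
  · exact Or.inr hab
  · exact Or.inl hba

/-! ### Interpolation -/

theorem interp_one {u w : ℤ[X]} {a : ℤ} (ha : u.eval a = w.eval a) :
    ∃ p, u = w + p * (X - C a) := by
  have : (X - C a) ∣ u - w := by
    rw [dvd_iff_isRoot, IsRoot, eval_sub, ha, sub_self]
  obtain ⟨p, hp⟩ := this
  exact ⟨p, by rw [← sub_eq_iff_eq_add', hp, mul_comm]⟩

theorem interp_two {u w : ℤ[X]} {a b : ℤ} (ha : u.eval a = w.eval a) (hb : u.eval b = w.eval b)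
    (hab : a ≠ b) : ∃ p, u = w + p * (X - C a) * (X - C b) := by
  obtain ⟨q, hq⟩ := interp_one hb
  have hqa : q.eval a = (0 : ℤ[X]).eval a := by
    have h := ha
    rw [hq] at h
    simp only [eval_add, eval_mul, eval_sub, eval_X, eval_C, add_eq_left, mul_eq_zero] at h
    rw [eval_zero]
    exact h.resolve_right (sub_ne_zero.2 hab)
  obtain ⟨p, hp⟩ := interp_one hqa
  exact ⟨p, by rw [hq, hp, zero_add]⟩

theorem interp_three {u w : ℤ[X]} {a b c : ℤ} (ha : u.eval a = w.eval a)
    (hb : u.eval b = w.eval b) (hc : u.eval c = w.eval c) (hab : a ≠ b) (hac : a ≠ c)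
    (hbc : b ≠ c) : ∃ p, u = w + p * (X - C a) * (X - C b) * (X - C c) := by
  obtain ⟨q, hq⟩ := interp_two hb hc hbc
  have hqa : q.eval a = (0 : ℤ[X]).eval a := by
    have h := ha
    rw [hq] at h
    simp only [eval_add, eval_mul, eval_sub, eval_X, eval_C, add_eq_left, mul_eq_zero] at h
    rw [eval_zero]
    exact (h.resolve_right (sub_ne_zero.2 hac)).resolve_right (sub_ne_zero.2 hab)
  obtain ⟨p, hp⟩ := interp_one hqa
  exact ⟨p, by rw [hq, hp, zero_add]⟩

/-! ### Nilpotency from the values along the orbit -/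

theorem nilpotentAt_one {u : ℤ[X]} {r : ℤ} (h : u.eval r = 0) : NilpotentAt u r 1 :=
  ⟨one_pos, h, fun n h1 h2 => by omega⟩

theorem nilpotentAt_two {u : ℤ[X]} {r a : ℤ} (hr : u.eval r = a) (ha : u.eval a = 0)
    (ha0 : a ≠ 0) : NilpotentAt u r 2 := by
  refine ⟨two_pos, by simp [polyIter, hr, ha], fun n h1 h2 => ?_⟩
  interval_cases n
  simpa [polyIter, hr] using ha0

theorem nilpotentAt_three {u : ℤ[X]} {r a b : ℤ} (hr : u.eval r = a) (ha : u.eval a = b)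
    (hb : u.eval b = 0) (ha0 : a ≠ 0) (hb0 : b ≠ 0) : NilpotentAt u r 3 := by
  refine ⟨three_pos, by simp [polyIter, hr, ha, hb], fun n h1 h2 => ?_⟩
  interval_cases n
  · simpa [polyIter, hr] using ha0
  · simpa [polyIter, hr, ha] using hb0

/-! ### Integrality constraints on further values -/

/-- Linear interpolation through two points of the orbit, evaluated at `x`; the slope is an
integer `s`, and the error term is a multiple of `(x - a)(x - b)`. -/
theorem eval_two {u : ℤ[X]} {a b : ℤ} (A s : ℤ) (ha : u.eval a = A)
    (hb : u.eval b = A + s * (b - a)) (hab : a ≠ b) (x : ℤ) :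
    ∃ t, u.eval x = A + s * (x - a) + t * ((x - a) * (x - b)) := by
  obtain ⟨p, hp⟩ := interp_two (u := u) (w := C A + C s * (X - C a)) (a := a) (b := b)
    (by simp [ha]) (by simp [hb]) hab
  refine ⟨p.eval x, ?_⟩
  conv_lhs => rw [hp]
  simp only [eval_add, eval_mul, eval_sub, eval_X, eval_C]
  ring

/-- Quadratic interpolation in Newton form through three points of the orbit, evaluated at `x`. -/
theorem eval_three {u : ℤ[X]} {a b c : ℤ} (A s t : ℤ) (ha : u.eval a = A)
    (hb : u.eval b = A + s * (b - a))
    (hc : u.eval c = A + s * (c - a) + t * ((c - a) * (c - b)))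
    (hab : a ≠ b) (hac : a ≠ c) (hbc : b ≠ c) (x : ℤ) :
    ∃ z, u.eval x = A + s * (x - a) + t * ((x - a) * (x - b))
      + z * ((x - a) * (x - b) * (x - c)) := by
  obtain ⟨p, hp⟩ := interp_three (u := u)
    (w := C A + C s * (X - C a) + C t * ((X - C a) * (X - C b))) (a := a) (b := b) (c := c)
    (by simp [ha]) (by simp [hb]) (by simp [hc]) hab hac hbc
  refine ⟨p.eval x, ?_⟩
  conv_lhs => rw [hp]
  simp only [eval_add, eval_mul, eval_sub, eval_X, eval_C]
  ring

/-! ### Orbits starting with 3, 2 -/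

theorem case_two {u : ℤ[X]} (h2 : u.eval 3 = 2) (hh : Hits u 2) :
    u.eval 2 = 0 ∨ (u.eval 2 = 1 ∧ u.eval 1 = 0) ∨ (u.eval 2 = 4 ∧ u.eval 4 = 0) := by
  obtain ⟨b, hb⟩ : ∃ b, u.eval 2 = b := ⟨_, rfl⟩
  have hd := hh.dvd
  have hB := hh.bounds (by norm_num)
  have hn := hh.next (by norm_num)
  rw [hb] at hd hB hn ⊢
  have : b = 0 ∨ b = 1 ∨ b = 3 ∨ b = 4 := by
    obtain ⟨l, r⟩ := hB
    interval_cases b <;> revert hd <;> decide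
  rcases this with rfl | rfl | rfl | rfl
  · exact Or.inl rfl
  · refine Or.inr (Or.inl ⟨rfl, ?_⟩)
    obtain ⟨c, hc⟩ : ∃ c, u.eval 1 = c := ⟨_, rfl⟩
    have hd := hn.dvd
    have hB := hn.bounds (by norm_num)
    rw [hc] at hd hB ⊢
    have : c = 0 ∨ c = 2 := by
      obtain ⟨l, r⟩ := hB
      interval_cases c <;> revert hd <;> decide
    rcases this with rfl | rfl
    · rfl
    · exact (hh.absurd_of_cycle (by norm_num) (by norm_num) hb hc).elim
  · exact (hh.absurd_of_cycle (by norm_num) (by norm_num) hb h2).elim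
  · refine Or.inr (Or.inr ⟨rfl, ?_⟩)
    -- The value 8 is ruled out once, as it may arise both as `u(4)` and as `u(6)`.
    have h8 : ¬ Hits u 8 := by
      intro h8
      have hd := h8.dvd
      have hB := h8.bounds (by norm_num)
      have e1 := u.sub_dvd_eval_sub 8 3
      have e2 := u.sub_dvd_eval_sub 8 2
      rw [h2] at e1
      rw [hb] at e2
      generalize u.eval 8 = e at *
      obtain ⟨l, r⟩ := hB
      interval_cases e <;> revert hd e1 e2 <;> decide
    obtain ⟨c, hc⟩ : ∃ c, u.eval 4 = c := ⟨_, rfl⟩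
    have hd := hn.dvd
    have hB := hn.bounds (by norm_num)
    have hn' := hn.next (by norm_num)
    have e1 := u.sub_dvd_eval_sub 4 2
    rw [hb] at e1
    rw [hc] at hd hB hn' e1 ⊢
    have : c = 0 ∨ c = 2 ∨ c = 6 ∨ c = 8 := by
      obtain ⟨l, r⟩ := hB
      interval_cases c <;> revert hd e1 <;> decide
    rcases this with rfl | rfl | rfl | rfl
    · rfl
    · exact (hn.absurd_of_cycle (by norm_num) (by norm_num) hc hb).elim
    · exfalso
      obtain ⟨z, hz⟩ := eval_three (u := u) (a := 3) (b := 2) (c := 4) 2 (-2) 3 h2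
        (by rw [hb]; norm_num) (by rw [hc]; norm_num) (by norm_num) (by norm_num) (by norm_num) 6
      have hd := hn'.dvd
      have hB := hn'.bounds (by norm_num)
      have hn2 := hn'.next (by norm_num)
      have : u.eval 6 = 8 := by omega
      exact h8 (this ▸ hn2)
    · exact absurd hn' h8

/-! ### Orbits starting with 3, 4 -/

theorem case_four {u : ℤ[X]} (h4 : u.eval 3 = 4) (hh : Hits u 4) :
    u.eval 4 = 0 ∨ (u.eval 4 = 2 ∧ u.eval 2 = 0) ∨ (u.eval 4 = 5 ∧ u.eval 5 = 0) := by
  obtain ⟨b, hb⟩ : ∃ b, u.eval 4 = b := ⟨_, rfl⟩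
  have hd := hh.dvd
  have hB := hh.bounds (by norm_num)
  have hn := hh.next (by norm_num)
  rw [hb] at hd hB hn ⊢
  have : b = 0 ∨ b = 2 ∨ b = 3 ∨ b = 5 ∨ b = 6 ∨ b = 8 := by
    obtain ⟨l, r⟩ := hB
    interval_cases b <;> revert hd <;> decide
  rcases this with rfl | rfl | rfl | rfl | rfl | rfl
  · exact Or.inl rfl
  · refine Or.inr (Or.inl ⟨rfl, ?_⟩)
    clear hd
    have hB := hn.bounds (by norm_num)
    have hd := hn.dvd
    obtain ⟨t, ht⟩ := eval_two (u := u) (a := 3) (b := 4) 4 (-2) h4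
      (by rw [hb]; norm_num) (by norm_num) 2
    obtain ⟨c, hc⟩ : ∃ c, u.eval 2 = c := ⟨_, rfl⟩
    rw [hc] at hd hB ht ⊢
    have : c = 0 ∨ c = 4 := by
      obtain ⟨l, r⟩ := hB
      interval_cases c <;> first | (revert hd; decide) | (clear hd; omega)
    rcases this with rfl | rfl
    · rfl
    · exact (hn.absurd_of_cycle (by norm_num) (by norm_num) hc hb).elim
  · exact (hh.absurd_of_cycle (by norm_num) (by norm_num) hb h4).elim
  · refine Or.inr (Or.inr ⟨rfl, ?_⟩)
    have hB := hn.bounds (by norm_num)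
    have hd := hn.dvd
    have hn' := hn.next (by norm_num)
    obtain ⟨c, hc⟩ : ∃ c, u.eval 5 = c := ⟨_, rfl⟩
    rw [hc] at hd hB hn' ⊢
    have : c = 0 ∨ c = 4 ∨ c = 6 ∨ c = 10 := by
      obtain ⟨l, r⟩ := hB
      interval_cases c <;> revert hd <;> decide
    rcases this with rfl | rfl | rfl | rfl
    · rfl
    · exact (hn.absurd_of_cycle (by norm_num) (by norm_num) hc hb).elim
    · exfalso
      refine Hits.absurd_of_invariant (u := u) (fun x => 6 ≤ x) (by norm_num) ?_
        (by norm_num : (6 : ℤ) ≤ 6) hn'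
      intro x hx hhx
      obtain ⟨z, hz⟩ := eval_three (u := u) (a := 3) (b := 4) (c := 5) 4 1 0 h4
        (by rw [hb]; norm_num) (by rw [hc]; norm_num) (by norm_num) (by norm_num) (by norm_num) x
      obtain ⟨l, r⟩ := hhx.bounds (by linarith)
      have hd := hhx.dvd
      show 6 ≤ u.eval x
      by_contra hlt
      -- A negative correction term is at least `(x - 3)(x - 4)(x - 5)` in absolute value, which
      -- exceeds `x + 1`, so that `u(x) < 0`, except at `x = 6`.
      have hz1 : z ≤ -1 := by
        by_contra hz1
        have : 0 ≤ z * ((x - 3) * (x - 4) * (x - 5)) :=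
          mul_nonneg (by linarith) (mul_nonneg (mul_nonneg (by linarith) (by linarith))
            (by linarith))
        linarith
      rcases hx.eq_or_lt with rfl | hx7
      · have : z = -1 := by omega
        subst this
        norm_num at hz
        rw [hz] at hd
        revert hd; decide
      · have h12 : 12 ≤ (x - 3) * (x - 4) := by nlinarith
        have h24 : 12 * (x - 5) ≤ (x - 3) * (x - 4) * (x - 5) :=
          mul_le_mul_of_nonneg_right h12 (by linarith)
        have : z * ((x - 3) * (x - 4) * (x - 5)) ≤ -1 * ((x - 3) * (x - 4) * (x - 5)) :=
          mul_le_mul_of_nonneg_right hz1 (by linarith)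
        linarith
    · exfalso
      obtain ⟨z, hz⟩ := eval_three (u := u) (a := 3) (b := 4) (c := 5) 4 1 2 h4
        (by rw [hb]; norm_num) (by rw [hc]; norm_num) (by norm_num) (by norm_num) (by norm_num) 10
      obtain ⟨l, r⟩ := hn'.bounds (by norm_num)
      omega
  · exfalso
    obtain ⟨t, ht⟩ := eval_two (u := u) (a := 3) (b := 4) 4 2 h4
      (by rw [hb]; norm_num) (by norm_num) 6
    have hB := hn.bounds (by norm_num)
    have hd := hn.dvd
    have : u.eval 6 = 4 := by
      generalize u.eval 6 = c at *
      obtain ⟨l, r⟩ := hB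
      interval_cases c <;> first | (revert hd; decide) | (clear hd; omega)
    exact hn.absurd_of_cycle (by norm_num) (by norm_num) this hb
  · exfalso
    obtain ⟨t, ht⟩ := eval_two (u := u) (a := 3) (b := 4) 4 4 h4
      (by rw [hb]; norm_num) (by norm_num) 8
    have hB := hn.bounds (by norm_num)
    have : u.eval 8 = 4 := by omega
    exact hn.absurd_of_cycle (by norm_num) (by norm_num) this hb

/-! ### Orbits starting with 3, 6 -/

theorem case_six {u : ℤ[X]} (h6 : u.eval 3 = 6) (hh : Hits u 6) : u.eval 6 = 0 := by
  obtain ⟨b, hb⟩ : ∃ b, u.eval 6 = b := ⟨_, rfl⟩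
  have hd := hh.dvd
  have hB := hh.bounds (by norm_num)
  have hn := hh.next (by norm_num)
  have e1 := u.sub_dvd_eval_sub 6 3
  rw [h6] at e1
  rw [hb] at hd hB hn e1 ⊢
  have : b = 0 ∨ b = 3 ∨ b = 9 ∨ b = 12 := by
    obtain ⟨l, r⟩ := hB
    interval_cases b <;> revert hd e1 <;> decide
  rcases this with rfl | rfl | rfl | rfl
  · rfl
  · exact (hh.absurd_of_cycle (by norm_num) (by norm_num) hb h6).elim
  · exfalso
    refine Hits.absurd_of_invariant (u := u) (fun x => 9 ≤ x) (by norm_num) ?_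
      (by norm_num : (9 : ℤ) ≤ 9) hn
    intro x hx hhx
    obtain ⟨z, hz⟩ := eval_two (u := u) (a := 3) (b := 6) 6 1 h6
      (by rw [hb]; norm_num) (by norm_num) x
    obtain ⟨l, r⟩ := hhx.bounds (by linarith)
    show 9 ≤ u.eval x
    by_contra hlt
    have hP : 6 * (x - 6) ≤ (x - 3) * (x - 6) :=
      mul_le_mul_of_nonneg_right (by linarith) (by linarith)
    have hz1 : z ≤ -1 := by
      by_contra hz1
      have : 0 ≤ z * ((x - 3) * (x - 6)) := mul_nonneg (by linarith) (by linarith)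
      linarith
    have : z * ((x - 3) * (x - 6)) ≤ -1 * ((x - 3) * (x - 6)) :=
      mul_le_mul_of_nonneg_right hz1 (by linarith)
    linarith
  · exfalso
    refine Hits.absurd_of_invariant (u := u) (fun x => 12 ≤ x) (by norm_num) ?_
      (by norm_num : (12 : ℤ) ≤ 12) hn
    intro x hx hhx
    obtain ⟨z, hz⟩ := eval_two (u := u) (a := 3) (b := 6) 6 2 h6
      (by rw [hb]; norm_num) (by norm_num) x
    obtain ⟨l, r⟩ := hhx.bounds (by linarith)
    show 12 ≤ u.eval x
    by_contra hlt
    have hP : 9 * (x - 6) ≤ (x - 3) * (x - 6) :=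
      mul_le_mul_of_nonneg_right (by linarith) (by linarith)
    have hz1 : z ≤ -1 := by
      by_contra hz1
      have : 0 ≤ z * ((x - 3) * (x - 6)) := mul_nonneg (by linarith) (by linarith)
      linarith
    have : z * ((x - 3) * (x - 6)) ≤ -1 * ((x - 3) * (x - 6)) :=
      mul_le_mul_of_nonneg_right hz1 (by linarith)
    linarith

/-! ### The classification -/

theorem stmt_11 (u : Polynomial ℤ) :
    (∃ m : ℕ, NilpotentAt u 3 m) ↔
      ∃ p : Polynomial ℤ,
        (u = (X - 3) * p ∧ NilpotentAt u 3 1) ∨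
        (u = 2 * (X - 2) + p * (X - 2) * (X - 3) ∧ NilpotentAt u 3 2) ∨
        (u = -2 * (X - 6) + p * (X - 3) * (X - 6) ∧ NilpotentAt u 3 2) ∨
        (u = -4 * (X - 4) + p * (X - 3) * (X - 4) ∧ NilpotentAt u 3 2) ∨
        (u = (X - 1) + p * (X - 1) * (X - 2) * (X - 3) ∧ NilpotentAt u 3 3) ∨
        (u = -((3 * X - 13) * (X - 2)) + p * (X - 2) * (X - 3) * (X - 4) ∧ NilpotentAt u 3 3) ∨
        (u = -((X - 5) * (3 * X - 7)) + p * (X - 3) * (X - 4) * (X - 5) ∧ NilpotentAt u 3 3) ∨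
        (u = -2 * (X - 4) + p * (X - 2) * (X - 3) * (X - 4) ∧ NilpotentAt u 3 3) := by
  constructor
  · rintro ⟨m, hm0, hm, -⟩
    have hh : Hits u 3 := ⟨m, hm⟩
    have hd := hh.dvd
    have hB := hh.bounds (by norm_num)
    have hn := hh.next (by norm_num)
    obtain ⟨a, h3⟩ : ∃ a, u.eval 3 = a := ⟨_, rfl⟩
    rw [h3] at hd hB hn
    have : a = 0 ∨ a = 2 ∨ a = 4 ∨ a = 6 := by
      obtain ⟨l, r⟩ := hB
      interval_cases a <;> revert hd <;> decide
    rcases this with rfl | rfl | rfl | rfl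
    · obtain ⟨p, hp⟩ := interp_one (u := u) (w := 0) (a := 3) (by simp [h3])
      simp only [map_ofNat] at hp
      exact ⟨p, Or.inl ⟨by rw [hp]; ring, nilpotentAt_one h3⟩⟩
    · rcases case_two h3 hn with h | ⟨h, h'⟩ | ⟨h, h'⟩
      · obtain ⟨p, hp⟩ := interp_two (u := u) (w := 2 * (X - 2)) (a := 2) (b := 3)
          (by norm_num [h3, h]) (by norm_num [h3, h]) (by norm_num)
        simp only [map_ofNat] at hp
        exact ⟨p, Or.inr (Or.inl
          ⟨hp, nilpotentAt_two h3 h (by norm_num)⟩)⟩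
      · obtain ⟨p, hp⟩ := interp_three (u := u) (w := X - 1) (a := 1) (b := 2)
          (c := 3) (by norm_num [h3, h, h']) (by norm_num [h3, h, h']) (by norm_num [h3, h, h'])
          (by norm_num) (by norm_num) (by norm_num)
        simp only [map_ofNat, map_one] at hp
        exact ⟨p, Or.inr (Or.inr (Or.inr (Or.inr (Or.inl
          ⟨hp, nilpotentAt_three h3 h h' (by norm_num) (by norm_num)⟩))))⟩
      · obtain ⟨p, hp⟩ := interp_three (u := u) (w := -2 * (X - 4)) (a := 2) (b := 3)
          (c := 4) (by norm_num [h3, h, h']) (by norm_num [h3, h, h']) (by norm_num [h3, h, h'])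
          (by norm_num) (by norm_num) (by norm_num)
        simp only [map_ofNat] at hp
        exact ⟨p, Or.inr (Or.inr (Or.inr (Or.inr (Or.inr (Or.inr (Or.inr (
          ⟨hp, nilpotentAt_three h3 h h' (by norm_num) (by norm_num)⟩)))))))⟩
    · rcases case_four h3 hn with h | ⟨h, h'⟩ | ⟨h, h'⟩
      · obtain ⟨p, hp⟩ := interp_two (u := u) (w := -4 * (X - 4)) (a := 3) (b := 4)
          (by norm_num [h3, h]) (by norm_num [h3, h]) (by norm_num)
        simp only [map_ofNat] at hp
        exact ⟨p, Or.inr (Or.inr (Or.inr (Or.inl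
          ⟨hp, nilpotentAt_two h3 h (by norm_num)⟩)))⟩
      · obtain ⟨p, hp⟩ := interp_three (u := u) (w := -((3 * X - 13) * (X - 2))) (a := 2) (b := 3)
          (c := 4) (by norm_num [h3, h, h']) (by norm_num [h3, h, h']) (by norm_num [h3, h, h'])
          (by norm_num) (by norm_num) (by norm_num)
        simp only [map_ofNat] at hp
        exact ⟨p, Or.inr (Or.inr (Or.inr (Or.inr (Or.inr (Or.inl
          ⟨hp, nilpotentAt_three h3 h h' (by norm_num) (by norm_num)⟩)))))⟩
      · obtain ⟨p, hp⟩ := interp_three (u := u) (w := -((X - 5) * (3 * X - 7))) (a := 3) (b := 4)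
          (c := 5) (by norm_num [h3, h, h']) (by norm_num [h3, h, h']) (by norm_num [h3, h, h'])
          (by norm_num) (by norm_num) (by norm_num)
        simp only [map_ofNat] at hp
        exact ⟨p, Or.inr (Or.inr (Or.inr (Or.inr (Or.inr (Or.inr (Or.inl
          ⟨hp, nilpotentAt_three h3 h h' (by norm_num) (by norm_num)⟩))))))⟩
    · have h := case_six h3 hn
      obtain ⟨p, hp⟩ := interp_two (u := u) (w := -2 * (X - 6)) (a := 3) (b := 6)
        (by norm_num [h3, h]) (by norm_num [h3, h]) (by norm_num)
      simp only [map_ofNat] at hp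
      exact ⟨p, Or.inr (Or.inr (Or.inl
        ⟨hp, nilpotentAt_two h3 h (by norm_num)⟩))⟩
  · rintro ⟨p, ⟨-, h⟩ | ⟨-, h⟩ | ⟨-, h⟩ | ⟨-, h⟩ | ⟨-, h⟩ | ⟨-, h⟩ | ⟨-, h⟩ | ⟨-, h⟩⟩ <;>
      exact ⟨_, h⟩
end

section
/- Let u be an integer polynomial, r_0 an integer, and set r_n = u^{(n)}(r_0) for all n ≥ 0. Suppose m ≥ 0 is an integer such that r_m = 0, r_{m+1} = 0, and r_i ≠ 0 for all 0 ≤ i < m. Then m ≤ 2; moreover, if m = 2 then r_0 divides 2 and r_1 = 2·r_0. -/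
/-!
Since `0` is a fixed point, `u = X * v`, so each iterate is the previous one multiplied by a value
of `v`, and differences of arguments divide differences of values of both `u` and `v`.
If the orbit ends in `a, b, 0` with `a, b ≠ 0` and `b = a * k`, then `b - a ∣ u b - u a = -b` gives
`k - 1 ∣ 1`, so `k = 2`, and then `a = b - a ∣ v b - v a = -2`.
If some `c ≠ 0` precedes `a`, with `a = c * j`, then `b - c ∣ v b - v c = -j` forces `2 * j - 1 ∣ j`,
hence `j = 1` and `a = c`, which is absurd because `v a = 2` and `v c = 1`.
-/

open Polynomial

/-- The last two nonzero terms `a`, `b` of an orbit of `X * v` reaching `0`. -/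
lemma last_two_terms (v : Polynomial ℤ) (a b : ℤ) (ha : a ≠ 0) (hb : b ≠ 0)
    (hab : b = a * v.eval a) (hb0 : v.eval b = 0) : v.eval a = 2 ∧ a ∣ 2 := by
  have h1 : b - a ∣ b * v.eval b - a * v.eval a := by
    have h := sub_dvd_eval_sub b a (X * v)
    rwa [eval_mul, eval_mul, eval_X, eval_X] at h
  have h2 : b - a ∣ v.eval b - v.eval a := sub_dvd_eval_sub b a v
  generalize v.eval a = k at *
  rw [hb0] at h1 h2
  subst hab
  have h3 : k - 1 ∣ k := by
    have : a * (k - 1) ∣ a * k := by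
      obtain ⟨t, ht⟩ := h1
      exact ⟨-t, by linear_combination -ht⟩
    exact (mul_dvd_mul_iff_left ha).1 this
  have h4 : k - 1 ∣ 1 := by
    have := dvd_sub h3 (dvd_refl (k - 1)); simpa using this
  have hk : k ≠ 0 := by rintro rfl; simp at hb
  have hk2 : k = 2 := by
    rcases Int.isUnit_iff.1 (isUnit_of_dvd_one h4) with h | h <;> omega
  subst hk2
  refine ⟨rfl, ?_⟩
  obtain ⟨t, ht⟩ := h2
  exact ⟨-t, by linear_combination -ht⟩

/-- No nonzero term `c` precedes the pair `a`, `2 * a`. -/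
lemma no_third_term (v : Polynomial ℤ) (c a : ℤ) (ha : a ≠ 0)
    (hca : a = c * v.eval c) (ha2 : v.eval a = 2) (hb0 : v.eval (2 * a) = 0) : False := by
  have h2 : 2 * a - c ∣ v.eval (2 * a) - v.eval c := sub_dvd_eval_sub _ _ v
  rw [hb0] at h2
  have hj : v.eval c ≠ 0 := by intro h; simp [h] at hca; exact ha hca
  have h3 : 2 * v.eval c - 1 ∣ v.eval c := by
    refine (Dvd.intro_left c ?_).trans ((dvd_neg).1 (by simpa using h2))
    linear_combination (-2) * hca
  have h4 : 2 * v.eval c - 1 ∣ 1 := by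
    have := dvd_sub (h3.mul_left 2) (dvd_refl (2 * v.eval c - 1)); simpa using this
  have hj1 : v.eval c = 1 := by
    rcases Int.isUnit_iff.1 (isUnit_of_dvd_one h4) with h | h <;> omega
  rw [hj1, mul_one] at hca
  subst hca
  omega

theorem stmt_14 (u : Polynomial ℤ) (r0 : ℤ) (r : ℕ → ℤ)
    (hr : ∀ n : ℕ, r n = polyIter u n r0) (m : ℕ)
    (hm : r m = 0) (hm1 : r (m + 1) = 0) (hmin : ∀ i : ℕ, i < m → r i ≠ 0) :
    m ≤ 2 ∧ (m = 2 → r 0 ∣ 2 ∧ r 1 = 2 * r 0) := by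
  have hs : ∀ n, r (n + 1) = u.eval (r n) := by
    intro n
    rw [hr, hr, polyIter, polyIter, Function.iterate_succ_apply']
  have h0 : u.eval 0 = 0 := by
    have := hs m
    rw [hm, hm1] at this
    exact this.symm
  obtain ⟨v, rfl⟩ : X ∣ u := by
    rwa [X_dvd_iff, coeff_zero_eq_eval_zero]
  simp only [eval_mul, eval_X] at hs
  rcases lt_or_ge m 2 with h | h
  · exact ⟨h.le, fun h' => by omega⟩
  obtain ⟨n, rfl⟩ := Nat.exists_eq_add_of_le' h
  have ha := hmin n (by omega)
  have hb := hmin (n + 1) (by omega)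
  have hvb : v.eval (r (n + 1)) = 0 := by
    have := hs (n + 1)
    rw [show n + 1 + 1 = n + 2 from rfl, hm] at this
    exact (mul_eq_zero.1 this.symm).resolve_left hb
  obtain ⟨h2, hd⟩ := last_two_terms v _ _ ha hb (hs n) hvb
  have hb2 : r (n + 1) = 2 * r n := by rw [hs, h2, mul_comm]
  cases n with
  | zero => exact ⟨le_rfl, fun _ => ⟨hd, hb2⟩⟩
  | succ k => exact (no_third_term v (r k) _ ha (hs k) h2 (hb2 ▸ hvb)).elim
end

section
/- Let u be an integer polynomial, r_0 an integer, and set r_n = u^{(n)}(r_0) for all n ≥ 0. Suppose m ≥ 0 is an integer such that r_m = 0, r_{m+2} = 0, r_{m+1} ≠ 0, and r_i ≠ 0 for all 0 ≤ i < m. Then m ≤ 3; moreover there exists ε ∈ {1, −1} such that: if m = 1 then r_0 = r_2 or r_0 = ε; if m = 2 then either (r_3 = r_1 and r_1 = r_0 + ε) or (r_0, r_1, r_3) = (2ε, ε, 3ε); and if m = 3 then r_0 = ε, r_1 = 2ε, r_2 = 3ε and r_4 = 3ε. -/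
/-!
Everything rests on one divisibility fact: if an integer polynomial `u` takes the same value `c` at
two distinct integers `x ≠ y`, then `(z - x) * (z - y) ∣ u(z) - c` for every integer `z`
(`mul_sub_dvd_eval_sub`). Put `a = u(0)`, so that `0 ↔ a` is a 2-cycle of `u`, and walk backwards
from `0` along the orbit.

* A preimage `x` of `0` is `a` or `±1`: if `x ≠ a`, then `x * a ∣ a`.
* Two steps back, `x ↦ y ↦ 0`. If `y = a`, then `u` agrees at `0` and `x`, whence `a - x = ±1`.
  Otherwise `y = δ = ±1`, and `(x - a) * (x - δ)` divides `δ`, whence `x = 2δ`, `a = 3δ`.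
* Three steps back, the same divisibilities leave only `ε ↦ 2ε ↦ 3ε ↦ 0 ↦ 3ε`.
* Four steps back is impossible: a preimage `v` of `ε` is at distance one from both `ε` and `3ε`, so
  `v = 2ε`, but `2ε ↦ 3ε`.

Since every tail of the orbit satisfies the same hypotheses, this bounds `m` by `3`.
-/

open Polynomial

lemma mul_sub_dvd_eval_sub (u : ℤ[X]) {x y : ℤ} (hxy : x ≠ y) (h : u.eval x = u.eval y) (z : ℤ) :
    (z - x) * (z - y) ∣ u.eval z - u.eval x := by
  obtain ⟨q, hq⟩ := X_sub_C_dvd_sub_C_eval (p := u) (a := x)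
  have e : ∀ t, u.eval t - u.eval x = (t - x) * q.eval t := fun t => by
    simpa using congrArg (eval t) hq
  have hqy : q.eval y = 0 := by
    have h1 := e y
    rw [h, sub_self] at h1
    exact (mul_eq_zero.1 h1.symm).resolve_left (sub_ne_zero.2 hxy.symm)
  rw [e z]
  exact mul_dvd_mul_left _ (by simpa [hqy] using sub_dvd_eval_sub z y q)

lemma eq_of_dvd_unit {d e : ℤ} (he : e = 1 ∨ e = -1) (h : d ∣ e) : d = 1 ∨ d = -1 := by
  apply Int.isUnit_iff.1
  exact isUnit_of_dvd_unit h (Int.isUnit_iff.2 he)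

lemma preimage_one (u : ℤ[X]) {x a : ℤ} (ha : a ≠ 0)
    (hx0 : u.eval x = 0) (h0 : u.eval 0 = a) (ha0 : u.eval a = 0) :
    x = a ∨ x = 1 ∨ x = -1 := by
  by_cases hxa : x = a
  · exact Or.inl hxa
  · right
    have h := mul_sub_dvd_eval_sub u hxa (hx0.trans ha0.symm) 0
    rw [h0, hx0] at h
    apply eq_of_dvd_unit (Or.inl rfl)
    apply Int.dvd_of_mul_dvd_mul_right ha
    simpa using h

lemma preimage_two (u : ℤ[X]) {x y a : ℤ} (hx : x ≠ 0) (hy : y ≠ 0) (ha : a ≠ 0)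
    (hxy : u.eval x = y) (hy0 : u.eval y = 0) (h0 : u.eval 0 = a) (ha0 : u.eval a = 0) :
    ∃ ε : ℤ, (ε = 1 ∨ ε = -1) ∧
      ((a = y ∧ y = x + ε) ∨ (x = 2 * ε ∧ y = ε ∧ a = 3 * ε)) := by
  by_cases hya : y = a
  · subst hya
    refine ⟨y - x, ?_, Or.inl ⟨rfl, by ring⟩⟩
    have h := mul_sub_dvd_eval_sub u hx.symm (h0.trans hxy.symm) y
    rw [h0, hy0] at h
    apply eq_of_dvd_unit (Or.inl rfl)
    apply Int.dvd_of_mul_dvd_mul_left hy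
    simpa using h
  · have hu := (preimage_one u ha hy0 h0 ha0).resolve_left hya
    refine ⟨y, hu, Or.inr ?_⟩
    have h := mul_sub_dvd_eval_sub u hya (hy0.trans ha0.symm) x
    rw [hxy, hy0, sub_zero] at h
    have h1 := eq_of_dvd_unit hu (dvd_of_mul_right_dvd h)
    have h2 := eq_of_dvd_unit hu (dvd_of_mul_left_dvd h)
    omega

lemma preimage_three (u : ℤ[X]) {w x y a : ℤ} (hw : w ≠ 0) (hx : x ≠ 0) (hy : y ≠ 0) (ha : a ≠ 0)
    (hwx : u.eval w = x) (hxy : u.eval x = y) (hy0 : u.eval y = 0) (h0 : u.eval 0 = a)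
    (ha0 : u.eval a = 0) :
    (w = 1 ∨ w = -1) ∧ x = 2 * w ∧ y = 3 * w ∧ a = 3 * w := by
  obtain ⟨δ, hδ, ⟨rfl, hax⟩ | ⟨rfl, rfl, rfl⟩⟩ := preimage_two u hx hy ha hxy hy0 h0 ha0
  · have h := mul_sub_dvd_eval_sub u hx.symm (h0.trans hxy.symm) w
    rw [h0, hwx, sub_zero] at h
    have hu : x - a = 1 ∨ x - a = -1 := by omega
    have h1 := eq_of_dvd_unit hu (dvd_of_mul_right_dvd h)
    have h2 := eq_of_dvd_unit hu (dvd_of_mul_left_dvd h)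
    have hwa : w ≠ a := by
      rintro rfl
      exact hx (hwx.symm.trans ha0)
    omega
  · -- `w - δ` and `w - 3δ` differ by `2` and both divide `2`, which forces `w = 2δ`.
    exfalso
    have hne : y ≠ 3 * y := by omega
    have h := mul_sub_dvd_eval_sub u hne (hy0.trans ha0.symm) w
    rw [hwx, hy0, sub_zero] at h
    have h1 := dvd_of_mul_right_dvd h
    have h2 := dvd_of_mul_left_dvd h
    have hw2 : w = 2 * y := by
      clear h hwx hxy hy0 h0 ha0
      rcases hδ with rfl | rfl
      · have b1 := Int.le_of_dvd (by norm_num) h1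
        have b2 : -(w - 1) ≤ 2 := Int.le_of_dvd (by norm_num) ((neg_dvd).2 h1)
        have : -1 ≤ w := by omega
        have : w ≤ 3 := by omega
        revert h1 h2
        interval_cases w <;> decide
      · have b1 : w + 1 ≤ 2 := Int.le_of_dvd (by norm_num) (by simpa using h1)
        have b2 : -(w + 1) ≤ 2 := Int.le_of_dvd (by norm_num) (by simpa using (neg_dvd).2 h1)
        have : -3 ≤ w := by omega
        have : w ≤ 1 := by omega
        revert h1 h2
        interval_cases w <;> decide
    rw [hw2, hxy] at hwx
    omega

lemma no_preimage_four (u : ℤ[X]) {v w x y a : ℤ} (hw : w ≠ 0) (hx : x ≠ 0)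
    (hy : y ≠ 0) (ha : a ≠ 0) (hvw : u.eval v = w) (hwx : u.eval w = x) (hxy : u.eval x = y)
    (hy0 : u.eval y = 0) (h0 : u.eval 0 = a) (ha0 : u.eval a = 0) : False := by
  obtain ⟨hu, rfl, rfl, rfl⟩ := preimage_three u hw hx hy ha hwx hxy hy0 h0 ha0
  have h1 := sub_dvd_eval_sub v w u
  have h2 := sub_dvd_eval_sub v (3 * w) u
  rw [hvw, hwx] at h1
  rw [hvw, hy0, sub_zero] at h2
  have h1 := eq_of_dvd_unit (by omega) h1
  have h2 := eq_of_dvd_unit hu h2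
  have hv : v = 2 * w := by omega
  rw [hv, hxy] at hvw
  omega

theorem stmt_15 (u : Polynomial ℤ) (r0 : ℤ) (r : ℕ → ℤ)
    (hr : ∀ n : ℕ, r n = polyIter u n r0) (m : ℕ)
    (hm : r m = 0) (hm2 : r (m + 2) = 0) (hm1 : r (m + 1) ≠ 0)
    (hmin : ∀ i : ℕ, i < m → r i ≠ 0) :
    m ≤ 3 ∧
      ∃ ε : ℤ, (ε = 1 ∨ ε = -1) ∧
        (m = 1 → r 0 = r 2 ∨ r 0 = ε) ∧
        (m = 2 → (r 3 = r 1 ∧ r 1 = r 0 + ε) ∨ (r 0 = 2 * ε ∧ r 1 = ε ∧ r 3 = 3 * ε)) ∧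
        (m = 3 → r 0 = ε ∧ r 1 = 2 * ε ∧ r 2 = 3 * ε ∧ r 4 = 3 * ε) := by
  have step : ∀ n, u.eval (r n) = r (n + 1) := fun n => by
    rw [hr, hr, polyIter, polyIter, Function.iterate_succ_apply']
  have h0 : u.eval 0 = r (m + 1) := by rw [← step, hm]
  have ha0 : u.eval (r (m + 1)) = 0 := by rw [step, hm2]
  match m with
  | 0 => exact ⟨by omega, 1, Or.inl rfl, by omega, by omega, by omega⟩
  | 1 =>
    refine ⟨by omega, ?_⟩
    rcases preimage_one u hm1 ((step 0).trans hm) h0 ha0 with h | h | h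
    · exact ⟨1, Or.inl rfl, fun _ => Or.inl h, by omega, by omega⟩
    · exact ⟨1, Or.inl rfl, fun _ => Or.inr h, by omega, by omega⟩
    · exact ⟨-1, Or.inr rfl, fun _ => Or.inr h, by omega, by omega⟩
  | 2 =>
    obtain ⟨ε, hε, h⟩ := preimage_two u (hmin 0 (by omega)) (hmin 1 (by omega)) hm1 (step 0)
      ((step 1).trans hm) h0 ha0
    exact ⟨by omega, ε, hε, by omega, fun _ => h, by omega⟩
  | 3 =>
    obtain ⟨hε, h⟩ := preimage_three u (hmin 0 (by omega)) (hmin 1 (by omega)) (hmin 2 (by omega))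
      hm1 (step 0) (step 1) ((step 2).trans hm) h0 ha0
    exact ⟨by omega, r 0, hε, by omega, by omega, fun _ => ⟨rfl, h⟩⟩
  | k + 4 =>
    exact (no_preimage_four u (hmin (k + 1) (by omega)) (hmin (k + 2) (by omega))
      (hmin (k + 3) (by omega)) hm1 (step k) (step (k + 1)) (step (k + 2))
      ((step (k + 3)).trans hm) h0 ha0).elim
end
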